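/- Let N ∈ ℕ, p ≥ 1 and q > p satisfy q ≤ (d−1)p/(d−1−p) if p < d−1, q < +∞ if p = d−1, and q = +∞ if p > d−1. Then there exists a constant C = C(N,d,m,p,q) < +∞ such that: for any ball B_R = B_R(x₀) ⊂ ℝ^d, any u_1, …, u_N ∈ W^{1,p}(B_R)^m and any δ ∈ (0, 1/2], there exists η ∈ W_0^{1,∞}(B_R) with 0 ≤ η ≤ 1, η = 1 on B_{(1−δ)R}, ‖∇η‖_{L^∞(B_R)} ≤ 2/(δR), and for all i ∈ {1,…,N}: ‖∇η ⊗ u_i‖_{L^q(B_R)} ≤ C R^{d/q − d/p − 1} δ^{−(1 + 1/p − 1/q)} [ R (∫_{B_R∖B_{(1−δ)R}} |Du_i|^p dx)^{1/p} + (∫_{B_R∖B_{(1−δ)R}} |u_i|^p dx)^{1/p} ], with the convention d/∞ = 1/∞ = 0. -/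

import Mathlib

open MeasureTheory Metric Set Filter
open scoped ENNReal Topology NNReal RealInnerProductSpace

noncomputable section

/-- `ℝ^d` as a Euclidean space. -/
abbrev Euc (d : ℕ) := EuclideanSpace ℝ (Fin d)

/-- The space `ℝ^{m×d}` of `m×d` matrices. -/
abbrev Mat (m d : ℕ) := Fin m → Fin d → ℝ

/-- Frobenius (Euclidean) norm of an `m×d` matrix. -/
def frobNorm {m d : ℕ} (ξ : Mat m d) : ℝ :=
  Real.sqrt (∑ i, ∑ j, ξ i j ^ 2)

/-- `φ ∈ C_c^∞(Ω)^m`: a smooth function with compact support contained in `Ω`. -/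
def IsCcSmooth {d m : ℕ} (Ω : Set (Euc d)) (φ : Euc d → Euc m) : Prop :=
  ContDiff ℝ (⊤ : ℕ∞) φ ∧ HasCompactSupport φ ∧ tsupport φ ⊆ Ω

/-- The (classical) Jacobian matrix of a differentiable map. -/
def smoothJac {d m : ℕ} (φ : Euc d → Euc m) (x : Euc d) : Mat m d :=
  fun i j => fderiv ℝ φ x (EuclideanSpace.single j 1) i

/-- `Du` is the weak Jacobian of `u` on `Ω` (integration by parts against test functions). -/
def IsWeakJacobianOn {d m : ℕ} (Ω : Set (Euc d)) (u : Euc d → Euc m)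
    (Du : Euc d → Mat m d) : Prop :=
  ∀ φ : Euc d → ℝ, ContDiff ℝ (⊤ : ℕ∞) φ → HasCompactSupport φ → tsupport φ ⊆ Ω →
    ∀ (i : Fin m) (j : Fin d),
      ∫ x in Ω, u x i * fderiv ℝ φ x (EuclideanSpace.single j 1) =
        - ∫ x in Ω, Du x i j * φ x

/-- `u ∈ W^{1,p}(Ω)^m` with weak Jacobian `Du`. -/
def MemW1p {d m : ℕ} (Ω : Set (Euc d)) (p : ℝ≥0∞) (u : Euc d → Euc m)
    (Du : Euc d → Mat m d) : Prop :=
  MemLp u p (volume.restrict Ω) ∧ MemLp Du p (volume.restrict Ω) ∧ IsWeakJacobianOn Ω u Du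

/-- Strong convergence `uₙ → v` in `W^{1,p}(Ω)^m` (together with the Jacobians). -/
def TendstoW1p {d m : ℕ} (Ω : Set (Euc d)) (p : ℝ≥0∞)
    (u : ℕ → Euc d → Euc m) (Du : ℕ → Euc d → Mat m d)
    (v : Euc d → Euc m) (Dv : Euc d → Mat m d) : Prop :=
  Tendsto (fun n => eLpNorm (u n - v) p (volume.restrict Ω)) atTop (𝓝 0) ∧
  Tendsto (fun n => eLpNorm (Du n - Dv) p (volume.restrict Ω)) atTop (𝓝 0)

/-- `v ∈ W_0^{1,p}(Ω)^m`, i.e. `v ∈ W^{1,p}` and `v` is a `W^{1,p}`-limit of functions in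
`C_c^∞(Ω)^m`. -/
def MemW1p0 {d m : ℕ} (Ω : Set (Euc d)) (p : ℝ≥0∞) (v : Euc d → Euc m)
    (Dv : Euc d → Mat m d) : Prop :=
  MemW1p Ω p v Dv ∧
  ∃ w : ℕ → Euc d → Euc m, (∀ n, IsCcSmooth Ω (w n)) ∧
    TendstoW1p Ω p w (fun n => smoothJac (w n)) v Dv

/-- `Ω` has Lipschitz boundary: near each boundary point, `Ω` is the subgraph of a Lipschitz
function over a hyperplane. -/
def HasLipschitzBoundary {d : ℕ} (Ω : Set (Euc d)) : Prop :=
  ∀ x ∈ frontier Ω, ∃ (ν : Euc d) (r L : ℝ) (ψ : Euc d → ℝ),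
    ‖ν‖ = 1 ∧ 0 < r ∧ 0 ≤ L ∧ LipschitzWith (Real.toNNReal L) ψ ∧
    ∀ y ∈ ball x r, (y ∈ Ω ↔ ⟪y, ν⟫ < ψ (y - ⟪y, ν⟫ • ν))

/-- Convexity of a `[0,+∞]`-valued function. -/
def ConvexENNReal {m d : ℕ} (f : Mat m d → ℝ≥0∞) : Prop :=
  ∀ ξ η : Mat m d, ∀ t : ℝ, 0 ≤ t → t ≤ 1 →
    f (t • ξ + (1 - t) • η) ≤ ENNReal.ofReal t * f ξ + ENNReal.ofReal (1 - t) * f η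

/-- The convex biconjugate `f**` of a `[0,+∞]`-valued function: the supremum of all affine
minorants of `f`. -/
def biconj {m d : ℕ} (f : Mat m d → ℝ≥0∞) (ξ : Mat m d) : ℝ≥0∞ :=
  ⨆ (L : Mat m d →ₗ[ℝ] ℝ) (c : ℝ) (_ : ∀ η, ENNReal.ofReal (L η + c) ≤ f η),
    ENNReal.ofReal (L ξ + c)

/-- Assumption (a4): the local stability estimate
`W(x,ξ) ≤ C_M (ess inf_{y ∈ B̄_δ(x) ∩ Ω} W(y,·))**(ξ) + α_M(x)` for `|ξ| ≤ M δ^{-d/p}`. -/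
def StabilityEstimate {d m : ℕ} (Ω : Set (Euc d)) (p : ℝ)
    (W : Euc d → Mat m d → ℝ≥0∞) : Prop :=
  ∀ M : ℝ, 1 < M → ∃ (CM δ₀ : ℝ) (αM : Euc d → ℝ≥0∞),
    0 < CM ∧ 0 < δ₀ ∧ (∫⁻ x in Ω, αM x) < ⊤ ∧
    ∀ δ : ℝ, 0 < δ → δ < δ₀ → ∀ x ∈ Ω, ∀ ξ : Mat m d,
      frobNorm ξ ≤ M * δ ^ (-(d : ℝ) / p) →
      W x ξ ≤ ENNReal.ofReal CM *
          biconj (fun η => essInf (fun y => W y η) (volume.restrict (closedBall x δ ∩ Ω))) ξ +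
        αM x

/-- Assumption 1 of the paper (items (a1)–(a4)) for the integrand `W` on `Ω`, with lower
growth exponent `p`. -/
def Assumption1 {d m : ℕ} (Ω : Set (Euc d)) (p : ℝ) (W : Euc d → Mat m d → ℝ≥0∞) : Prop :=
  Measurable (Function.uncurry W) ∧
  (∀ᵐ x ∂volume.restrict Ω, ConvexENNReal (W x) ∧ LowerSemicontinuous (W x)) ∧
  (∀ᵐ x ∂volume.restrict Ω, ∀ ξ, ENNReal.ofReal (frobNorm ξ ^ p) ≤ W x ξ) ∧
  ((p ≤ (d : ℝ) - 1 →
      ∃ (C q : ℝ) (α : Euc d → ℝ≥0∞), 0 < C ∧ p < q ∧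
        (p < (d : ℝ) - 1 → q ≤ ((d : ℝ) - 1) * p / ((d : ℝ) - 1 - p)) ∧
        (∫⁻ x in Ω, α x) < ⊤ ∧
        ∀ᵐ x ∂volume.restrict Ω, ∀ ξ,
          W x ξ ≤ ENNReal.ofReal (C * frobNorm ξ ^ q) + α x) ∧
    ((d : ℝ) - 1 < p →
      ∃ θ : ℝ, 0 < θ ∧
        (∫⁻ x in Ω, ⨆ ξ ∈ {ξ : Mat m d | frobNorm ξ ≤ θ}, W x ξ) < ⊤)) ∧
  StabilityEstimate Ω p W



/-- Un-normalised chart of the half sphere `s x_j > 0`. -/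
def zc {n : ℕ} (j : Fin (n + 1)) (s : ℝ) (y : Fin n → ℝ) : Euc (n + 1) :=
  WithLp.toLp 2 (Fin.insertNth j s y : Fin (n + 1) → ℝ)

/-- Normalised chart of the half sphere `s x_j > 0`. -/
def ph {n : ℕ} (j : Fin (n + 1)) (s : ℝ) (y : Fin n → ℝ) : Euc (n + 1) :=
  ‖zc j s y‖⁻¹ • zc j s y

lemma zc_self {n : ℕ} (j : Fin (n + 1)) (s : ℝ) (y : Fin n → ℝ) : zc j s y j = s := by
  simp [zc]

lemma zc_succAbove {n : ℕ} (j : Fin (n + 1)) (s : ℝ) (y : Fin n → ℝ) (i : Fin n) :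
    zc j s y (j.succAbove i) = y i := by
  simp [zc]

lemma one_le_norm_zc {n : ℕ} (j : Fin (n + 1)) {s : ℝ} (hs : |s| = 1) (y : Fin n → ℝ) :
    1 ≤ ‖zc j s y‖ := by
  have h := PiLp.norm_apply_le (zc j s y) j
  rw [zc_self, Real.norm_eq_abs, hs] at h
  exact h

lemma contDiff_zc {n : ℕ} (j : Fin (n + 1)) (s : ℝ) : ContDiff ℝ (⊤ : ℕ∞) (zc j s : (Fin n → ℝ) → _) := by
  rw [contDiff_euclidean]
  intro i
  refine Fin.succAboveCases j ?_ ?_ i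
  · simp_rw [zc_self]; exact contDiff_const
  · intro k; simp_rw [zc_succAbove]; exact contDiff_apply ℝ ℝ k

lemma contDiff_ph {n : ℕ} (j : Fin (n + 1)) {s : ℝ} (hs : |s| = 1) :
    ContDiff ℝ (⊤ : ℕ∞) (ph j s : (Fin n → ℝ) → _) := by
  have h0 : ∀ y : Fin n → ℝ, ‖zc j s y‖ ≠ 0 := fun y => by
    have := one_le_norm_zc j hs y; positivity
  have h1 : ∀ y : Fin n → ℝ, zc j s y ≠ 0 := fun y => by
    have := h0 y; exact norm_ne_zero_iff.1 this
  exact ((contDiff_zc j s).norm ℝ h1 |>.inv h0).smul (contDiff_zc j s)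

lemma norm_ph {n : ℕ} (j : Fin (n + 1)) {s : ℝ} (hs : |s| = 1) (y : Fin n → ℝ) :
    ‖ph j s y‖ = 1 := by
  have := one_le_norm_zc j hs y
  rw [ph, norm_smul, norm_inv, norm_norm, inv_mul_cancel₀]
  positivity

lemma norm_zc_le {n : ℕ} (j : Fin (n + 1)) {s : ℝ} (hs : |s| = 1) (y : Fin n → ℝ)
    (hy : ‖y‖ ≤ 2) : ‖zc j s y‖ ≤ 2 * n + 1 := by
  have h1 : ‖zc j s y‖ ≤ ∑ i, ‖zc j s y i‖ := by
    rw [EuclideanSpace.norm_eq]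
    apply Real.sqrt_le_iff.2
    refine ⟨by positivity, ?_⟩
    exact Finset.sum_sq_le_sq_sum_of_nonneg (fun i _ => norm_nonneg _)
  rw [Fin.sum_univ_succAbove _ j] at h1
  simp only [zc_self, zc_succAbove, Real.norm_eq_abs, hs] at h1
  have h2 : ∑ i : Fin n, |y i| ≤ ∑ i : Fin n, 2 := by
    apply Finset.sum_le_sum
    intro i _
    exact (norm_le_pi_norm y i).trans hy
  simp at h2
  linarith

lemma lint_smul {n : ℕ} {t : ℝ} (ht : 0 < t) (G : (Fin n → ℝ) → ℝ≥0∞) (hG : Measurable G) :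
    ∫⁻ w, G w = ENNReal.ofReal (t ^ n) * ∫⁻ y, G (t • y) := by
  have h := Measure.map_addHaar_smul (volume : Measure (Fin n → ℝ)) ht.ne'
  have h2 : ∫⁻ y, G (t • y) = ∫⁻ y, G y ∂(Measure.map (fun x => t • x) (volume : Measure (Fin n → ℝ))) := by
    rw [lintegral_map hG (by fun_prop)]
  rw [h2, h, lintegral_smul_measure, smul_eq_mul, ← mul_assoc, ← ENNReal.ofReal_mul (by positivity)]
  have : t ^ n * |(t ^ Module.finrank ℝ (Fin n → ℝ))⁻¹| = 1 := by
    rw [abs_of_pos (by positivity)]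
    simp
    field_simp
  rw [this]; simp

lemma lint_smul_Ioi {t : ℝ} (ht : 0 < t) (G : ℝ → ℝ≥0∞) (hG : Measurable G) :
    ∫⁻ w in Ioi 0, G w = ENNReal.ofReal t * ∫⁻ y in Ioi 0, G (t * y) := by
  rw [← lintegral_indicator measurableSet_Ioi, ← lintegral_indicator measurableSet_Ioi]
  have h := Measure.map_addHaar_smul (volume : Measure ℝ) ht.ne'
  have h2 : ∫⁻ y, (Ioi 0).indicator (fun y => G (t * y)) y
      = ∫⁻ y, (Ioi 0).indicator G y ∂(Measure.map (fun x => t • x) (volume : Measure ℝ)) := by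
    rw [lintegral_map (hG.indicator measurableSet_Ioi) (by fun_prop)]
    congr 1; ext y
    simp [Set.indicator_apply, mul_pos_iff_of_pos_left ht]
  rw [h2, h, lintegral_smul_measure, smul_eq_mul, ← mul_assoc, ← ENNReal.ofReal_mul (by positivity)]
  have : t * |(t ^ Module.finrank ℝ ℝ)⁻¹| = 1 := by
    rw [abs_of_pos (by positivity)]
    simp
    field_simp
  rw [this]; simp

lemma lint_half {s : ℝ} (hs : |s| = 1) (G : ℝ → ℝ≥0∞) :
    ∫⁻ a, {a : ℝ | 0 < s * a}.indicator G a = ∫⁻ t in Ioi 0, G (s * t) := by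
  rw [← lintegral_indicator measurableSet_Ioi]
  rcases eq_or_eq_neg_of_abs_eq hs with rfl | rfl
  · congr 1; ext a; simp [Set.indicator_apply]
  · rw [← lintegral_neg_eq_self]
    congr 1; ext a; simp [Set.indicator_apply]

lemma lint_insertNth {n : ℕ} (j : Fin (n + 1)) (F : Euc (n + 1) → ℝ≥0∞) (hF : Measurable F) :
    ∫⁻ x, F x = ∫⁻ a, ∫⁻ w, F (zc j a w) := by
  rw [← (PiLp.volume_preserving_toLp (Fin (n+1))).lintegral_comp hF]
  have h := (volume_preserving_piFinSuccAbove (fun _ : Fin (n+1) => ℝ) j).symm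
  have hF2 : Measurable (fun a : Fin (n+1) → ℝ => F (WithLp.toLp 2 a)) := hF.comp (by fun_prop)
  rw [← h.lintegral_comp hF2]
  rw [Measure.volume_eq_prod, lintegral_prod]
  · rfl
  · apply Measurable.aemeasurable
    apply hF.comp
    exact Measurable.comp (by fun_prop) (MeasurableEquiv.measurable _)

lemma measurable_zc_uncurry {n : ℕ} (j : Fin (n + 1)) :
    Measurable (fun q : ℝ × (Fin n → ℝ) => zc j q.1 q.2) := by
  have : (fun q : ℝ × (Fin n → ℝ) => zc j q.1 q.2) =
    fun q => WithLp.toLp 2 ((MeasurableEquiv.piFinSuccAbove (fun _ : Fin (n+1) => ℝ) j).symm q) := rfl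
  rw [this]
  exact Measurable.comp (by fun_prop) (MeasurableEquiv.measurable _)

lemma zc_smul {n : ℕ} (j : Fin (n + 1)) (s t : ℝ) (y : Fin n → ℝ) :
    zc j (s * t) (t • y) = t • zc j s y := by
  ext i
  refine Fin.succAboveCases j ?_ ?_ i
  · simp [zc_self, mul_comm]
  · intro k; simp [zc_succAbove]

lemma measurable_ph {n : ℕ} (j : Fin (n + 1)) {s : ℝ} (hs : |s| = 1) :
    Measurable (ph j s : (Fin n → ℝ) → _) := (contDiff_ph j hs).continuous.measurable

lemma polar_chart {n : ℕ} (j : Fin (n + 1)) {s : ℝ} (hs : |s| = 1) (F : Euc (n + 1) → ℝ≥0∞)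
    (hF : Measurable F) :
    ∫⁻ x, {x : Euc (n+1) | 0 < s * x j}.indicator F x =
      ∫⁻ y : Fin n → ℝ, ∫⁻ r in Ioi (0:ℝ),
        ENNReal.ofReal (r ^ n) * ENNReal.ofReal (‖zc j s y‖⁻¹ ^ (n + 1)) * F (r • ph j s y) := by
  have hz : Measurable (zc j s : (Fin n → ℝ) → _) := (contDiff_zc j s).continuous.measurable
  have hset : MeasurableSet {x : Euc (n+1) | 0 < s * x j} :=
    measurableSet_lt measurable_const (by fun_prop)
  rw [lint_insertNth j _ (hF.indicator hset)]
  have e1 : ∀ a : ℝ, ∫⁻ w, {x : Euc (n+1) | 0 < s * x j}.indicator F (zc j a w) =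
      {a : ℝ | 0 < s * a}.indicator (fun a => ∫⁻ w, F (zc j a w)) a := by
    intro a
    by_cases h : 0 < s * a
    · simp [zc_self, h]
    · simp [zc_self, h]
  simp_rw [e1]
  rw [lint_half hs]
  have e2 : ∫⁻ t in Ioi (0:ℝ), ∫⁻ w, F (zc j (s * t) w) =
      ∫⁻ t in Ioi (0:ℝ), ∫⁻ y, ENNReal.ofReal (t ^ n) * F (t • zc j s y) := by
    apply setLIntegral_congr_fun measurableSet_Ioi
    intro t ht
    have hm : Measurable (fun w : Fin n → ℝ => F (zc j (s * t) w)) :=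
      hF.comp (contDiff_zc j _).continuous.measurable
    simp only
    rw [lint_smul ht _ hm, lintegral_const_mul]
    · simp_rw [zc_smul]
    · exact hF.comp (hz.const_smul t)
  rw [e2, lintegral_lintegral_swap]
  · congr 1; ext y
    have h1 := one_le_norm_zc j hs y
    have hpos : 0 < ‖zc j s y‖⁻¹ := by positivity
    rw [lint_smul_Ioi hpos]
    · rw [← lintegral_const_mul]
      · apply setLIntegral_congr_fun measurableSet_Ioi
        intro r hr
        simp only
        rw [← mul_assoc, ← ENNReal.ofReal_mul hpos.le, ← ENNReal.ofReal_mul (by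
          have : (0:ℝ) < r := hr
          positivity)]
        congr 2
        · ring
        · rw [ph, smul_smul, mul_comm]
      · fun_prop
    · fun_prop
  · apply Measurable.aemeasurable
    simp only [Function.uncurry_def]
    fun_prop

/-- signs -/
def sg (b : Bool) : ℝ := if b then 1 else -1

lemma abs_sg (b : Bool) : |sg b| = 1 := by cases b <;> simp [sg]

lemma chart_lower {n : ℕ} (j : Fin (n + 1)) {s : ℝ} (hs : |s| = 1) (F : Euc (n + 1) → ℝ≥0∞)
    (hF : Measurable F) :
    ∫⁻ r in Ioi (0:ℝ), ∫⁻ y in closedBall (0 : Fin n → ℝ) 2,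
        ENNReal.ofReal (r ^ n) * F (r • ph j s y) ≤
      ENNReal.ofReal ((2 * n + 1) ^ (n + 1)) * ∫⁻ x, F x := by
  have hphm : Measurable (ph j s : (Fin n → ℝ) → _) := measurable_ph j hs
  have hm : Measurable (fun q : ℝ × (Fin n → ℝ) => ENNReal.ofReal (q.1 ^ n) * F (q.1 • ph j s q.2)) := by
    fun_prop
  rw [lintegral_lintegral_swap hm.aemeasurable]
  calc _ ≤ ∫⁻ y in closedBall (0 : Fin n → ℝ) 2, ENNReal.ofReal ((2 * n + 1) ^ (n + 1)) *
        ∫⁻ r in Ioi (0:ℝ),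
        ENNReal.ofReal (r ^ n) * ENNReal.ofReal (‖zc j s y‖⁻¹ ^ (n + 1)) * F (r • ph j s y) := by
        apply setLIntegral_mono' measurableSet_closedBall
        intro y hy
        rw [← lintegral_const_mul]
        · apply lintegral_mono
          intro r
          have h1 := one_le_norm_zc j hs y
          have h2 := norm_zc_le j hs y (by simpa using hy)
          have : (1:ℝ≥0∞) ≤ ENNReal.ofReal ((2 * n + 1) ^ (n + 1)) *
              ENNReal.ofReal (‖zc j s y‖⁻¹ ^ (n + 1)) := by
            rw [← ENNReal.ofReal_mul (by positivity), ← mul_pow]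
            rw [ENNReal.one_le_ofReal]
            apply one_le_pow₀
            rw [← div_eq_mul_inv, le_div_iff₀ (by positivity)]
            linarith
          calc _ = 1 * (ENNReal.ofReal (r ^ n) * F (r • ph j s y)) := by rw [one_mul]
            _ ≤ (ENNReal.ofReal ((2 * n + 1) ^ (n + 1)) *
              ENNReal.ofReal (‖zc j s y‖⁻¹ ^ (n + 1))) * (ENNReal.ofReal (r ^ n) * F (r • ph j s y)) := by
                gcongr
            _ = _ := by ring
        · fun_prop
    _ ≤ ∫⁻ y, ENNReal.ofReal ((2 * n + 1) ^ (n + 1)) *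
        ∫⁻ r in Ioi (0:ℝ),
        ENNReal.ofReal (r ^ n) * ENNReal.ofReal (‖zc j s y‖⁻¹ ^ (n + 1)) * F (r • ph j s y) :=
        setLIntegral_le_lintegral _ _
    _ = ENNReal.ofReal ((2 * n + 1) ^ (n + 1)) * ∫⁻ x, {x : Euc (n+1) | 0 < s * x j}.indicator F x := by
        rw [polar_chart j hs F hF, lintegral_const_mul' _ _ ENNReal.ofReal_ne_top]
    _ ≤ _ := by
        gcongr
        exact Set.indicator_le_self _ _ _

lemma exists_chart {n : ℕ} (x : Euc (n + 1)) (hx : x ≠ 0) :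
    ∃ (j : Fin (n + 1)) (b : Bool), 0 < sg b * x j ∧ ∀ i, |x i| ≤ |x j| := by
  obtain ⟨j, hj⟩ := Finite.exists_max (fun i => |x i|)
  have h0 : x j ≠ 0 := by
    intro h0
    apply hx
    ext i
    have := hj i
    rw [h0] at this
    simpa using this
  rcases lt_or_gt_of_ne h0 with h | h
  · exact ⟨j, false, by simp [sg, h], hj⟩
  · exact ⟨j, true, by simp [sg, h], hj⟩

lemma chart_upper {n : ℕ} (F : Euc (n + 1) → ℝ≥0∞) (hF : Measurable F) :
    ∫⁻ x, F x ≤ ∑ k : Fin (n + 1) × Bool,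
      ∫⁻ r in Ioi (0:ℝ), ∫⁻ y in closedBall (0 : Fin n → ℝ) 1,
        ENNReal.ofReal (r ^ n) * F (r • ph k.1 (sg k.2) y) := by
  set S : Fin (n + 1) × Bool → Set (Euc (n+1)) := fun k => {x | ∀ i, |x i| ≤ |x k.1|} with hS
  have hSm : ∀ k, MeasurableSet (S k) := by
    intro k
    have : S k = ⋂ i, {x | |x i| ≤ |x k.1|} := by ext; simp [hS]
    rw [this]
    exact MeasurableSet.iInter fun i => measurableSet_le (by fun_prop) (by fun_prop)
  have hFm : ∀ k, Measurable ((S k).indicator F) := fun k => hF.indicator (hSm k)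
  have hset : ∀ k : Fin (n+1) × Bool, MeasurableSet {x : Euc (n+1) | 0 < sg k.2 * x k.1} :=
    fun k => measurableSet_lt measurable_const (by fun_prop)
  calc ∫⁻ x, F x ≤ ∫⁻ x, ∑ k : Fin (n + 1) × Bool,
        {x : Euc (n+1) | 0 < sg k.2 * x k.1}.indicator ((S k).indicator F) x := by
        apply lintegral_mono_ae
        have : ∀ᵐ x : Euc (n+1), x ≠ 0 := by
          rw [ae_iff]; simp
        filter_upwards [this] with x hx
        obtain ⟨j, b, h1, h2⟩ := exists_chart x hx
        calc F x = {x : Euc (n+1) | 0 < sg b * x j}.indicator ((S (j,b)).indicator F) x := by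
              have h3 : x ∈ S (j,b) := h2
              have h4 : x ∈ {x : Euc (n+1) | 0 < sg b * x j} := h1
              rw [Set.indicator_of_mem h4, Set.indicator_of_mem h3]
          _ ≤ _ := Finset.single_le_sum (f := fun k : Fin (n + 1) × Bool =>
              {x : Euc (n+1) | 0 < sg k.2 * x k.1}.indicator ((S k).indicator F) x)
              (fun _ _ => zero_le) (Finset.mem_univ (j,b))
    _ = ∑ k : Fin (n + 1) × Bool, ∫⁻ x,
        {x : Euc (n+1) | 0 < sg k.2 * x k.1}.indicator ((S k).indicator F) x :=
        lintegral_finsetSum _ fun k _ => (hFm k).indicator (hset k)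
    _ ≤ _ := by
        apply Finset.sum_le_sum
        intro k _
        have hphm : Measurable (ph k.1 (sg k.2) : (Fin n → ℝ) → _) := measurable_ph k.1 (abs_sg _)
        rw [polar_chart k.1 (abs_sg k.2) _ (hFm k)]
        have hm : Measurable (fun q : ℝ × (Fin n → ℝ) =>
            ENNReal.ofReal (q.1 ^ n) * F (q.1 • ph k.1 (sg k.2) q.2)) := by
          fun_prop
        have hsw := lintegral_lintegral_swap (μ := volume.restrict (Ioi (0:ℝ)))
          (ν := volume.restrict (closedBall (0 : Fin n → ℝ) 1))
          (f := fun r y => ENNReal.ofReal (r ^ n) * F (r • ph k.1 (sg k.2) y)) hm.aemeasurable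
        rw [hsw]
        rw [← lintegral_indicator measurableSet_closedBall]
        apply lintegral_mono
        intro y
        have h1 := one_le_norm_zc k.1 (abs_sg k.2) y
        by_cases hy : y ∈ closedBall (0 : Fin n → ℝ) 1
        · rw [Set.indicator_of_mem hy]
          apply lintegral_mono
          intro r
          simp only
          gcongr
          · calc _ ≤ ENNReal.ofReal (r ^ n) * 1 := by
                  gcongr
                  rw [ENNReal.ofReal_le_one]
                  apply pow_le_one₀ (by positivity)
                  exact inv_le_one_of_one_le₀ h1
              _ = _ := mul_one _
          · exact Set.indicator_le_self _ _ _
        · rw [Set.indicator_of_notMem hy]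
          apply le_of_eq
          rw [← lintegral_zero (μ := volume.restrict (Ioi (0:ℝ)))]
          apply setLIntegral_congr_fun measurableSet_Ioi
          intro r hr
          have hr' : (0:ℝ) < r := hr
          simp only
          rw [Set.indicator_of_notMem, mul_zero]
          intro hmem
          apply hy
          rw [mem_closedBall_zero_iff, pi_norm_le_iff_of_nonneg zero_le_one]
          intro i
          have := hmem (k.1.succAbove i)
          simp only [ph, PiLp.smul_apply, zc_self, zc_succAbove, smul_eq_mul, abs_mul, abs_sg,
            ← mul_assoc] at this
          have hp : 0 < |r| * |‖zc k.1 (sg k.2) y‖⁻¹| :=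
            mul_pos (abs_pos.2 (by positivity)) (abs_pos.2 (by positivity))
          rw [Real.norm_eq_abs]
          exact le_of_mul_le_mul_left this hp


lemma lint_holder {α : Type*} [MeasurableSpace α] (μ : Measure α) {p : ℝ} (hp : 1 ≤ p)
    (g : α → ℝ≥0∞) (hg : AEMeasurable g μ) :
    ∫⁻ a, g a ∂μ ≤ (μ univ) ^ (1 - 1 / p) * (∫⁻ a, g a ^ p ∂μ) ^ (1 / p) := by
  rcases eq_or_lt_of_le hp with rfl | hp1
  · simp
  have hc : Real.HolderConjugate p (Real.conjExponent p) := Real.HolderConjugate.conjExponent hp1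
  have h := ENNReal.lintegral_mul_le_Lp_mul_Lq μ hc hg (aemeasurable_const (b := (1:ℝ≥0∞)))
  simp only [Pi.mul_apply, mul_one, ENNReal.one_rpow, lintegral_const, one_mul] at h
  rw [mul_comm]
  convert h using 3
  have := hc.inv_add_inv_eq_one
  rw [one_div, one_div]; linarith

lemma morrey (n m : ℕ) {p : ℝ} (hp : 1 ≤ p) (hn : (n : ℝ) < p) :
    ∃ C : ℝ≥0∞, C ≠ ⊤ ∧ ∀ v : (Fin n → ℝ) → Euc m, ContDiff ℝ 1 v →
      eLpNorm v ⊤ (volume.restrict (closedBall 0 1)) ≤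
        C * (∫⁻ y in closedBall (0 : Fin n → ℝ) 2, (‖fderiv ℝ v y‖ₑ ^ p + ‖v y‖ₑ ^ p)) ^ (1 / p) := by
  have hp0 : 0 < p := by linarith
  set B : Set (Fin n → ℝ) := closedBall 0 1 with hB
  set b : ℝ≥0∞ := volume B with hb
  have hb0 : b ≠ 0 := (measure_closedBall_pos volume _ one_pos).ne'
  have hbt : b ≠ ⊤ := measure_closedBall_lt_top.ne
  set I : ℝ≥0∞ := ∫⁻ t in Ioc (0:ℝ) 1, ENNReal.ofReal (t ^ (-(n:ℝ) / p)) with hI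
  have hIt : I ≠ ⊤ := by
    have h1 : IntervalIntegrable (fun t : ℝ => t ^ (-(n:ℝ) / p)) volume 0 1 := by
      apply intervalIntegral.intervalIntegrable_rpow'
      rw [lt_div_iff₀ hp0]; linarith
    rw [intervalIntegrable_iff_integrableOn_Ioc_of_le zero_le_one] at h1
    have := h1.lintegral_lt_top
    exact this.ne
  refine ⟨b⁻¹ * (b ^ (1 - 1 / p) * (1 + I)), ?_, ?_⟩
  · apply ENNReal.mul_ne_top (by simpa using hb0)
    apply ENNReal.mul_ne_top
    · apply ENNReal.rpow_ne_top_of_nonneg _ hbt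
      rw [sub_nonneg, div_le_one hp0]; exact hp
    · simp [hIt]
  intro v hv
  have hvc : Continuous v := hv.continuous
  have hdc : Continuous (fderiv ℝ v) := hv.continuous_fderiv one_ne_zero
  set M := ∫⁻ y in closedBall (0 : Fin n → ℝ) 2, (‖fderiv ℝ v y‖ₑ ^ p + ‖v y‖ₑ ^ p) with hM
  rw [eLpNorm_exponent_top]
  apply eLpNormEssSup_le_of_ae_enorm_bound
  filter_upwards [ae_restrict_mem measurableSet_closedBall] with x hx
  -- pointwise inequality
  have key : ∀ z ∈ B, ‖v x‖ₑ ≤ ‖v (x + z)‖ₑ + ∫⁻ t in Ioc (0:ℝ) 1, ‖fderiv ℝ v (x + t • z)‖ₑ := by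
    intro z hz
    have hd : ∀ t : ℝ, HasDerivAt (fun t : ℝ => v (x + t • z)) (fderiv ℝ v (x + t • z) z) t := by
      intro t
      have h1 : HasDerivAt (fun t : ℝ => x + t • z) z t := by
        simpa using ((hasDerivAt_id t).smul_const z).const_add x
      exact ((hv.differentiable one_ne_zero) _).hasFDerivAt.comp_hasDerivAt t h1
    have hcont : Continuous (fun t : ℝ => fderiv ℝ v (x + t • z) z) := by fun_prop
    have hInt0 := intervalIntegral.integral_eq_sub_of_hasDerivAt (a := 0) (b := 1)
      (fun t _ => hd t) (hcont.intervalIntegrable 0 1)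
    simp only [one_smul, zero_smul, add_zero] at hInt0
    have hvx : v x = v (x + z) - ∫ t in (0:ℝ)..1, fderiv ℝ v (x + t • z) z := by rw [hInt0]; abel
    rw [hvx]
    refine (enorm_sub_le).trans ?_
    gcongr
    rw [intervalIntegral.integral_of_le zero_le_one]
    refine (enorm_integral_le_lintegral_enorm _).trans ?_
    apply lintegral_mono
    intro t
    calc ‖fderiv ℝ v (x + t • z) z‖ₑ ≤ ‖fderiv ℝ v (x + t • z)‖ₑ * ‖z‖ₑ :=
          ContinuousLinearMap.le_opENorm _ _
      _ ≤ ‖fderiv ℝ v (x + t • z)‖ₑ * 1 := by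
          gcongr
          rw [← ofReal_norm, ENNReal.ofReal_le_one]
          simpa [hB] using hz
      _ = _ := mul_one _
  have sc : ∀ t ∈ Ioc (0:ℝ) 1, ∀ g : (Fin n → ℝ) → ℝ≥0∞, Measurable g →
      ∫⁻ z in B, g (x + t • z) ≤ ENNReal.ofReal (t ^ (-(n:ℝ))) *
        ∫⁻ y in closedBall (0 : Fin n → ℝ) 2, g y := by
    intro t ht g hg
    have h1 : ∫⁻ y in closedBall (0 : Fin n → ℝ) 2, g y =
        ENNReal.ofReal (t ^ n) * ∫⁻ z, (closedBall (0 : Fin n → ℝ) 2).indicator g (x + t • z) := by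
      rw [← lintegral_indicator measurableSet_closedBall]
      have hgm : Measurable ((closedBall (0 : Fin n → ℝ) 2).indicator g) :=
        hg.indicator measurableSet_closedBall
      rw [← lintegral_add_left_eq_self _ x, lint_smul ht.1]
      fun_prop
    rw [h1, ← mul_assoc, ← ENNReal.ofReal_mul (Real.rpow_nonneg ht.1.le _)]
    have h2 : t ^ (-(n:ℝ)) * t ^ n = 1 := by
      rw [Real.rpow_neg ht.1.le, Real.rpow_natCast]
      have := ht.1
      field_simp
    rw [h2, ENNReal.ofReal_one, one_mul, ← lintegral_indicator measurableSet_closedBall]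
    apply lintegral_mono
    intro z
    by_cases hz : z ∈ B
    · have : x + t • z ∈ closedBall (0 : Fin n → ℝ) 2 := by
        simp only [hB, mem_closedBall_zero_iff] at hz hx ⊢
        calc ‖x + t • z‖ ≤ ‖x‖ + ‖t • z‖ := norm_add_le _ _
          _ = ‖x‖ + t * ‖z‖ := by rw [norm_smul, Real.norm_eq_abs, abs_of_pos ht.1]
          _ ≤ 1 + 1 * 1 := by
            gcongr
            exact ht.2
          _ = 2 := by norm_num
      simp only
      rw [Set.indicator_of_mem hz, Set.indicator_of_mem this]
    · rw [Set.indicator_of_notMem hz]; exact zero_le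
  have hbt' : ∀ t ∈ Ioc (0:ℝ) 1, ∀ g : (Fin n → ℝ) → ℝ≥0∞, Measurable g →
      (∀ y, g y ^ p ≤ ‖fderiv ℝ v y‖ₑ ^ p + ‖v y‖ₑ ^ p) →
      ∫⁻ z in B, g (x + t • z) ≤ b ^ (1 - 1 / p) *
        (ENNReal.ofReal (t ^ (-(n:ℝ) / p)) * M ^ (1 / p)) := by
    intro t ht g hg hgp
    refine (lint_holder _ hp _ (by fun_prop)).trans ?_
    rw [Measure.restrict_apply_univ]
    gcongr
    have e : ENNReal.ofReal (t ^ (-(n:ℝ) / p)) = ENNReal.ofReal (t ^ (-(n:ℝ))) ^ (1 / p) := by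
      rw [ENNReal.ofReal_rpow_of_nonneg (Real.rpow_nonneg ht.1.le _) (by positivity),
        ← Real.rpow_mul ht.1.le]
      ring_nf
    rw [e, ← ENNReal.mul_rpow_of_nonneg _ _ (by positivity)]
    gcongr
    refine (sc t ht (fun y => g y ^ p) (by fun_prop)).trans ?_
    gcongr
    exact lintegral_mono hgp
  have m1 : Measurable (fun y => ‖v y‖ₑ) := hvc.enorm.measurable
  have m2 : Measurable (fun y => ‖fderiv ℝ v y‖ₑ) := hdc.enorm.measurable
  have e1 : ∫⁻ z in B, ‖v (x + z)‖ₑ ≤ b ^ (1 - 1 / p) * M ^ (1 / p) := by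
    have := hbt' 1 ⟨one_pos, le_rfl⟩ (fun y => ‖v y‖ₑ) m1 (fun y => le_add_self)
    simpa using this
  have e2 : ∫⁻ z in B, ∫⁻ t in Ioc (0:ℝ) 1, ‖fderiv ℝ v (x + t • z)‖ₑ ≤
      b ^ (1 - 1 / p) * (I * M ^ (1 / p)) := by
    have hc2 : Continuous (fun q : (Fin n → ℝ) × ℝ => ‖fderiv ℝ v (x + q.2 • q.1)‖ₑ) := by
      apply Continuous.enorm
      exact hdc.comp (by fun_prop)
    rw [lintegral_lintegral_swap hc2.measurable.aemeasurable]
    calc _ ≤ ∫⁻ t in Ioc (0:ℝ) 1, b ^ (1 - 1 / p) *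
        (ENNReal.ofReal (t ^ (-(n:ℝ) / p)) * M ^ (1 / p)) := by
          apply setLIntegral_mono' measurableSet_Ioc
          intro t ht
          exact hbt' t ht (fun y => ‖fderiv ℝ v y‖ₑ) m2 (fun y => le_self_add)
      _ = _ := by
          rw [lintegral_const_mul _ (by fun_prop), lintegral_mul_const _ (by fun_prop)]
  have e3 : b * ‖v x‖ₑ ≤ b ^ (1 - 1 / p) * ((1 + I) * M ^ (1 / p)) := by
    calc b * ‖v x‖ₑ = ∫⁻ z in B, ‖v x‖ₑ := by
          rw [setLIntegral_const, mul_comm]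
      _ ≤ ∫⁻ z in B, (‖v (x + z)‖ₑ + ∫⁻ t in Ioc (0:ℝ) 1, ‖fderiv ℝ v (x + t • z)‖ₑ) :=
          setLIntegral_mono' measurableSet_closedBall key
      _ = (∫⁻ z in B, ‖v (x + z)‖ₑ) + ∫⁻ z in B, ∫⁻ t in Ioc (0:ℝ) 1, ‖fderiv ℝ v (x + t • z)‖ₑ := by
          exact lintegral_add_left (m1.comp (measurable_const_add x)) _
      _ ≤ _ := add_le_add e1 e2
      _ = _ := by ring
  calc ‖v x‖ₑ = b⁻¹ * (b * ‖v x‖ₑ) := by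
        rw [← mul_assoc, ENNReal.inv_mul_cancel hb0 hbt, one_mul]
    _ ≤ b⁻¹ * (b ^ (1 - 1 / p) * ((1 + I) * M ^ (1 / p))) := by gcongr
    _ = _ := by ring


lemma cut_exists (n m : ℕ) {p : ℝ} (hp : 1 ≤ p) :
    ∃ K : ℝ≥0∞, K ≠ ⊤ ∧ ∀ v : (Fin n → ℝ) → Euc m, ContDiff ℝ 1 v →
      ∃ w : (Fin n → ℝ) → Euc m, ContDiff ℝ 1 w ∧ (∀ y ∈ closedBall 0 1, w y = v y) ∧
        w.support ⊆ closedBall 0 2 ∧ HasCompactSupport w ∧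
        (∀ y ∉ closedBall (0 : Fin n → ℝ) 2, fderiv ℝ w y = 0) ∧
        (∫⁻ y, ‖fderiv ℝ w y‖ₑ ^ p) ^ (1 / p) ≤
        K * (∫⁻ y in closedBall (0 : Fin n → ℝ) 2, (‖fderiv ℝ v y‖ₑ ^ p + ‖v y‖ₑ ^ p)) ^ (1 / p) := by
  have hp0 : 0 < p := by linarith
  let χ : ContDiffBump (0 : Fin n → ℝ) := ⟨1, 2, one_pos, one_lt_two⟩
  have hχ : ContDiff ℝ 1 χ := χ.contDiff
  have hχc : HasCompactSupport χ := χ.hasCompactSupport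
  obtain ⟨L, hL⟩ : ∃ L, ∀ y, ‖fderiv ℝ χ y‖ ≤ L :=
    (hχ.continuous_fderiv one_ne_zero).bounded_above_of_compact_support (hχc.fderiv ℝ)
  have hL0 : 0 ≤ L := (norm_nonneg _).trans (hL 0)
  set A : ℝ≥0∞ := 2 ^ (p - 1) * (1 + ENNReal.ofReal L ^ p) with hA
  have hAt : A ≠ ⊤ := by
    apply ENNReal.mul_ne_top
    · exact ENNReal.rpow_ne_top_of_nonneg (by linarith) (by simp)
    · simp [hp0.le]
  refine ⟨A ^ (1 / p), ENNReal.rpow_ne_top_of_nonneg (by positivity) hAt, ?_⟩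
  intro v hv
  refine ⟨fun y => χ y • v y, hχ.smul hv, ?_, ?_, ?_, ?_, ?_⟩
  · intro y hy
    have : χ y = 1 := χ.one_of_mem_closedBall hy
    simp [this]
  · intro y hy
    have h1 : χ y ≠ 0 := by
      intro h; apply hy; simp [h]
    have h2 : y ∈ Function.support χ := h1
    rw [χ.support_eq] at h2
    exact ball_subset_closedBall h2
  · exact hχc.smul_right
  · intro y hy
    have ht : y ∉ tsupport (fun y => χ y • v y) := by
      intro h
      have h2 := tsupport_smul_subset_left χ v h
      rw [χ.tsupport_eq] at h2
      exact hy h2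
    exact image_eq_zero_of_notMem_tsupport (fun h => ht (tsupport_fderiv_subset ℝ h))
  · rw [← ENNReal.mul_rpow_of_nonneg _ _ (by positivity)]
    gcongr
    rw [← lintegral_const_mul' _ _ hAt, ← lintegral_indicator measurableSet_closedBall]
    apply lintegral_mono
    intro y
    simp only
    by_cases hy : y ∈ closedBall (0 : Fin n → ℝ) 2
    · rw [Set.indicator_of_mem hy]
      have hfd : fderiv ℝ (fun y => χ y • v y) y =
          χ y • fderiv ℝ v y + (fderiv ℝ χ y).smulRight (v y) :=
        fderiv_fun_smul (hχ.differentiable one_ne_zero y) (hv.differentiable one_ne_zero y)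
      have hb : ‖fderiv ℝ (fun y => χ y • v y) y‖ₑ ≤ ‖fderiv ℝ v y‖ₑ + ENNReal.ofReal L * ‖v y‖ₑ := by
        rw [hfd]
        rw [← ofReal_norm, ← ofReal_norm (fderiv ℝ v y), ← ofReal_norm (v y),
          ← ENNReal.ofReal_mul hL0, ← ENNReal.ofReal_add (by positivity) (by positivity)]
        apply ENNReal.ofReal_le_ofReal
        refine (norm_add_le _ _).trans ?_
        apply add_le_add
        · rw [norm_smul, Real.norm_eq_abs, abs_of_nonneg χ.nonneg]
          exact mul_le_of_le_one_left (norm_nonneg _) χ.le_one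
        · rw [ContinuousLinearMap.norm_smulRight_apply]
          gcongr
          exact hL y
      calc _ ≤ (‖fderiv ℝ v y‖ₑ + ENNReal.ofReal L * ‖v y‖ₑ) ^ p := by gcongr
        _ ≤ 2 ^ (p - 1) * (‖fderiv ℝ v y‖ₑ ^ p + (ENNReal.ofReal L * ‖v y‖ₑ) ^ p) :=
            ENNReal.rpow_add_le_mul_rpow_add_rpow _ _ hp
        _ = 2 ^ (p - 1) * (1 * ‖fderiv ℝ v y‖ₑ ^ p + ENNReal.ofReal L ^ p * ‖v y‖ₑ ^ p) := by
            rw [ENNReal.mul_rpow_of_nonneg _ _ hp0.le, one_mul]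
        _ ≤ 2 ^ (p - 1) * ((1 + ENNReal.ofReal L ^ p) * ‖fderiv ℝ v y‖ₑ ^ p +
              (1 + ENNReal.ofReal L ^ p) * ‖v y‖ₑ ^ p) := by
            gcongr
            · exact le_self_add
            · exact le_add_self
        _ = _ := by rw [hA]; ring
    · have ht : y ∉ tsupport (fun y => χ y • v y) := by
        intro h
        have h2 := tsupport_smul_subset_left χ v h
        rw [χ.tsupport_eq] at h2
        exact hy h2
      have hz : fderiv ℝ (fun y => χ y • v y) y = 0 :=
        image_eq_zero_of_notMem_tsupport (fun h => ht (tsupport_fderiv_subset ℝ h))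
      have h0 : ‖fderiv ℝ (fun y => χ y • v y) y‖ₑ = 0 := by
        rw [← ofReal_norm, norm_eq_zero.2 hz, ENNReal.ofReal_zero]
      rw [h0, ENNReal.zero_rpow_of_pos hp0]
      exact zero_le

lemma sob_gns (n m : ℕ) {p p' : ℝ} (hp' : 1 ≤ p') (hpp : p' ≤ p) (hn : p' < n) {q : ℝ≥0}
    (hq : p'⁻¹ - (n : ℝ)⁻¹ ≤ (q : ℝ)⁻¹) :
    ∃ C : ℝ≥0∞, C ≠ ⊤ ∧ ∀ v : (Fin n → ℝ) → Euc m, ContDiff ℝ 1 v →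
      eLpNorm v q (volume.restrict (closedBall 0 1)) ≤
        C * (∫⁻ y in closedBall (0 : Fin n → ℝ) 2, (‖fderiv ℝ v y‖ₑ ^ p + ‖v y‖ₑ ^ p)) ^ (1 / p) := by
  have hp : 1 ≤ p := hp'.trans hpp
  have hp0 : 0 < p := by linarith
  obtain ⟨K, hK, hcut⟩ := cut_exists n m hp
  lift p' to ℝ≥0 using by linarith
  lift p to ℝ≥0 using by linarith
  set s : Set (Fin n → ℝ) := closedBall 0 2 with hs
  set D : ℝ≥0∞ := volume s ^ (1 / (p' : ℝ) - 1 / (p : ℝ)) with hD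
  have hDt : D ≠ ⊤ := by
    apply ENNReal.rpow_ne_top_of_nonneg _ measure_closedBall_lt_top.ne
    rw [sub_nonneg]
    apply one_div_le_one_div_of_le _ hpp
    linarith
  refine ⟨eLpNormLESNormFDerivOfLeConst (Euc m) volume s p' q * (K * D), ?_, ?_⟩
  · exact ENNReal.mul_ne_top (by simp) (ENNReal.mul_ne_top hK hDt)
  intro v hv
  obtain ⟨w, hw, hwv, hws, hwc, hwd, hle⟩ := hcut v hv
  have h1 := eLpNorm_le_eLpNorm_fderiv_of_le (volume : Measure (Fin n → ℝ)) hw hws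
    (p := p') (q := q) (by exact_mod_cast hp') (by simpa using (by exact_mod_cast hn : p' < (n : ℝ≥0))) (by simpa using hq)
    isBounded_closedBall
  have h2 : eLpNorm v q (volume.restrict (closedBall 0 1)) ≤ eLpNorm w q volume := by
    calc _ = eLpNorm w q (volume.restrict (closedBall 0 1)) := by
          apply eLpNorm_congr_ae
          filter_upwards [ae_restrict_mem measurableSet_closedBall] with y hy
          exact (hwv y hy).symm
      _ ≤ _ := eLpNorm_mono_measure _ Measure.restrict_le_self
  set g : (Fin n → ℝ) → ℝ := fun y => ‖fderiv ℝ w y‖ with hg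
  have hgn : ∀ r : ℝ≥0∞, eLpNorm (fderiv ℝ w) r volume = eLpNorm g r volume :=
    fun r => (eLpNorm_norm _).symm
  have hgc : Continuous g := (hw.continuous_fderiv one_ne_zero).norm
  have hsup : Function.support g ⊆ s := by
    intro y hy
    by_contra h
    exact hy (norm_eq_zero.2 (hwd y h))
  have hr : ∀ r : ℝ≥0∞, eLpNorm g r volume = eLpNorm g r (volume.restrict s) := by
    intro r
    exact (eLpNorm_restrict_eq_of_support_subset hsup).symm
  have h3 : eLpNorm (fderiv ℝ w) p' volume ≤ eLpNorm (fderiv ℝ w) p volume * D := by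
    rw [hgn, hgn, hr, hr]
    have := eLpNorm_le_eLpNorm_mul_rpow_measure_univ (μ := volume.restrict s)
      (f := g) (p := (p' : ℝ≥0∞)) (q := (p : ℝ≥0∞)) (by exact_mod_cast hpp)
      hgc.aestronglyMeasurable
    rw [Measure.restrict_apply_univ, ENNReal.coe_toReal, ENNReal.coe_toReal] at this
    exact this
  have h4 : eLpNorm (fderiv ℝ w) p volume = (∫⁻ y, ‖fderiv ℝ w y‖ₑ ^ (p:ℝ)) ^ (1 / (p:ℝ)) := by
    rw [eLpNorm_eq_lintegral_rpow_enorm_toReal (by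
      have : p ≠ 0 := by
        rintro rfl
        simp at hp0
      simpa using this) (by simp)]
    simp
  calc _ ≤ _ := h2
    _ ≤ _ := h1
    _ ≤ eLpNormLESNormFDerivOfLeConst (Euc m) volume s p' q * (eLpNorm (fderiv ℝ w) p volume * D) := by
        gcongr
    _ ≤ eLpNormLESNormFDerivOfLeConst (Euc m) volume s p' q *
        ((K * (∫⁻ y in s, (‖fderiv ℝ v y‖ₑ ^ (p:ℝ) + ‖v y‖ₑ ^ (p:ℝ))) ^ (1 / (p:ℝ))) * D) := by
        rw [h4]
        gcongr
    _ = _ := by ring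

lemma sob_one (m : ℕ) (q : ℝ≥0∞) :
    ∃ C : ℝ≥0∞, C ≠ ⊤ ∧ ∀ v : (Fin 1 → ℝ) → Euc m, ContDiff ℝ 1 v →
      eLpNorm v q (volume.restrict (closedBall 0 1)) ≤
        C * (∫⁻ y in closedBall (0 : Fin 1 → ℝ) 2,
          (‖fderiv ℝ v y‖ₑ ^ (1:ℝ) + ‖v y‖ₑ ^ (1:ℝ))) ^ (1 / (1:ℝ)) := by
  obtain ⟨K, hK, hcut⟩ := cut_exists 1 m (le_refl (1:ℝ))
  set s : Set (Fin 1 → ℝ) := closedBall 0 1 with hs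
  have hst : volume s ≠ ⊤ := measure_closedBall_lt_top.ne
  refine ⟨K * volume s ^ (q.toReal⁻¹), ENNReal.mul_ne_top hK
    (ENNReal.rpow_ne_top_of_nonneg (by positivity) hst), ?_⟩
  intro v hv
  obtain ⟨w, hw, hwv, hws, hwc, hwd, hle⟩ := hcut v hv
  set M := (∫⁻ y in closedBall (0 : Fin 1 → ℝ) 2,
          (‖fderiv ℝ v y‖ₑ ^ (1:ℝ) + ‖v y‖ₑ ^ (1:ℝ))) ^ (1 / (1:ℝ)) with hM
  have hpt : ∀ y, ‖w y‖ₑ ≤ K * M := by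
    intro y
    refine le_trans ?_ hle
    simp only [ENNReal.rpow_one, div_one]
    let ι : ℝ → (Fin 1 → ℝ) := fun t _ => t
    have hι : ContDiff ℝ 1 ι := contDiff_pi.2 fun _ => contDiff_id
    have hιd : ∀ t, HasDerivAt ι (fun _ => 1) t := fun t => hasDerivAt_pi.2 fun _ => hasDerivAt_id t
    have hιe : Topology.IsClosedEmbedding ι :=
      (Homeomorph.funUnique (Fin 1) ℝ).symm.isClosedEmbedding
    have hg : HasCompactSupport (w ∘ ι) := hwc.comp_isClosedEmbedding hιe
    have h := HasCompactSupport.enorm_le_lintegral_Ici_deriv (hw.comp hι) hg (y 0)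
    have hy : ι (y 0) = y := by ext i; simp [ι, Subsingleton.elim i 0]
    rw [Function.comp_apply, hy] at h
    refine h.trans ((setLIntegral_le_lintegral _ _).trans ?_)
    have hmp : MeasurePreserving ι volume volume := by
      have := (volume_preserving_funUnique (Fin 1) ℝ).symm
      exact this
    rw [← hmp.lintegral_comp ((hw.continuous_fderiv one_ne_zero).enorm.measurable)]
    apply lintegral_mono
    intro t
    have hd : HasDerivAt (w ∘ ι) (fderiv ℝ w (ι t) (fun _ => 1)) t :=
      ((hw.differentiable one_ne_zero) _).hasFDerivAt.comp_hasDerivAt t (hιd t)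
    simp only
    rw [hd.deriv]
    calc _ ≤ ‖fderiv ℝ w (ι t)‖ₑ * ‖(fun _ => 1 : Fin 1 → ℝ)‖ₑ :=
          ContinuousLinearMap.le_opENorm _ _
      _ ≤ ‖fderiv ℝ w (ι t)‖ₑ * 1 := by
          gcongr
          rw [← ofReal_norm, ENNReal.ofReal_le_one]
          rw [pi_norm_le_iff_of_nonneg zero_le_one]
          simp
      _ = _ := mul_one _
  have h2 : eLpNorm v q (volume.restrict s) ≤ (K * M) • (volume.restrict s) univ ^ (q.toReal⁻¹) := by
    refine eLpNorm_le_of_ae_enorm_bound ?_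
    filter_upwards [ae_restrict_mem measurableSet_closedBall] with y hy
    rw [← hwv y hy]
    exact hpt y
  refine h2.trans (le_of_eq ?_)
  rw [Measure.restrict_apply_univ, smul_eq_mul]; ring

lemma sobolev_local (n m : ℕ) (p : ℝ) (q : ℝ≥0∞) (hp : 1 ≤ p)
    (hq1 : p < n → q ≤ ENNReal.ofReal (n * p / (n - p)))
    (hq2 : p = n → q < ⊤) (hq3 : n < p → q = ⊤) (hq : q ≠ 0) :
    ∃ C : ℝ≥0∞, C ≠ ⊤ ∧ ∀ v : (Fin n → ℝ) → Euc m, ContDiff ℝ 1 v →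
      eLpNorm v q (volume.restrict (closedBall 0 1)) ≤
        C * (∫⁻ y in closedBall (0 : Fin n → ℝ) 2, (‖fderiv ℝ v y‖ₑ ^ p + ‖v y‖ₑ ^ p)) ^ (1 / p) := by
  have hp0 : 0 < p := by linarith
  rcases lt_trichotomy p n with h | h | h
  · have hqt : q ≠ ⊤ := ne_top_of_le_ne_top ENNReal.ofReal_ne_top (hq1 h)
    lift q to ℝ≥0 using hqt
    refine sob_gns n m hp le_rfl h ?_
    have hq0 : 0 < (q : ℝ) := by
      have : q ≠ 0 := by simpa using hq
      exact_mod_cast pos_iff_ne_zero.2 this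
    have hle : (q : ℝ) ≤ n * p / (n - p) := by
      have := ENNReal.toReal_mono ENNReal.ofReal_ne_top (hq1 h)
      rw [ENNReal.toReal_ofReal (by
        apply div_nonneg (by positivity); linarith)] at this
      simpa using this
    have h1 : (n * p / (n - p))⁻¹ ≤ (q : ℝ)⁻¹ := inv_anti₀ hq0 hle
    refine le_trans (le_of_eq ?_) h1
    have : (n : ℝ) - p ≠ 0 := by linarith
    have : (n : ℝ) ≠ 0 := by linarith
    field_simp
  · have hqt : q ≠ ⊤ := (hq2 h).ne
    rcases eq_or_ne n 1 with rfl | hn1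
    · obtain rfl : p = 1 := by simpa using h
      exact sob_one m q
    lift q to ℝ≥0 using hqt
    have hq0 : 0 < (q : ℝ) := by
      have : q ≠ 0 := by simpa using hq
      exact_mod_cast pos_iff_ne_zero.2 this
    have hn : (1:ℝ) < n := by
      have : 1 ≤ n := by
        have : (1:ℝ) ≤ n := by linarith
        exact_mod_cast this
      have : 1 < n := by omega
      exact_mod_cast this
    have hn0 : (0:ℝ) < n := by linarith
    -- choose the auxiliary exponent
    refine sob_gns n m (p' := max 1 ((n:ℝ)⁻¹ + (q:ℝ)⁻¹)⁻¹) (le_max_left _ _) ?_ ?_ ?_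
    · apply max_le hp
      rw [h]
      apply inv_le_of_inv_le₀ hn0
      have : 0 < (q:ℝ)⁻¹ := by positivity
      linarith
    · apply max_lt hn
      apply inv_lt_of_inv_lt₀ hn0
      have : 0 < (q:ℝ)⁻¹ := by positivity
      linarith
    · have h1 : (max 1 ((n:ℝ)⁻¹ + (q:ℝ)⁻¹)⁻¹)⁻¹ ≤ (((n:ℝ)⁻¹ + (q:ℝ)⁻¹)⁻¹)⁻¹ :=
        inv_anti₀ (by positivity) (le_max_right _ _)
      rw [inv_inv] at h1
      linarith
  · rw [hq3 h]
    exact morrey n m hp h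


lemma lint_normed {d : ℕ} (φ : ContDiffBump (0 : Euc d)) (x : Euc d) :
    ∫⁻ y, ENNReal.ofReal (φ.normed volume (x - y)) = 1 := by
  have h1 : ∫⁻ y, ENNReal.ofReal (φ.normed volume (x - y))
      = ∫⁻ y, ENNReal.ofReal (φ.normed volume y) :=
    lintegral_sub_left_eq_self (fun y => ENNReal.ofReal (φ.normed volume y)) x
  rw [h1, ← ofReal_integral_eq_lintegral_ofReal φ.integrable_normed
    (Eventually.of_forall fun y => φ.nonneg_normed y), φ.integral_normed, ENNReal.ofReal_one]

lemma lint_normed' {d : ℕ} (φ : ContDiffBump (0 : Euc d)) (y : Euc d) :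
    ∫⁻ x, ENNReal.ofReal (φ.normed volume (x - y)) = 1 := by
  have h1 : ∫⁻ x, ENNReal.ofReal (φ.normed volume (x - y))
      = ∫⁻ y, ENNReal.ofReal (φ.normed volume y) :=
    lintegral_sub_right_eq_self (fun y => ENNReal.ofReal (φ.normed volume y)) y
  rw [h1, ← ofReal_integral_eq_lintegral_ofReal φ.integrable_normed
    (Eventually.of_forall fun y => φ.nonneg_normed y), φ.integral_normed, ENNReal.ofReal_one]

lemma measurable_normed {d : ℕ} (φ : ContDiffBump (0 : Euc d)) :
    Measurable (fun z : Euc d => ENNReal.ofReal (φ.normed volume z)) :=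
  (φ.continuous_normed.measurable).ennreal_ofReal

lemma moll_jensen {d : ℕ} (φ : ContDiffBump (0 : Euc d)) {p : ℝ} (hp : 1 ≤ p)
    {G : Euc d → ℝ≥0∞} (hG : AEMeasurable G) (J A : Set (Euc d)) (hJ : MeasurableSet J)
    (hA : MeasurableSet A) (hJA : ∀ x ∈ J, ∀ y, dist x y < φ.rOut → y ∈ A) :
    ∫⁻ x in J, (∫⁻ y, ENNReal.ofReal (φ.normed volume (x - y)) * G y) ^ p
      ≤ ∫⁻ y in A, G y ^ p := by
  have hp0 : 0 < p := by linarith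
  have key : ∀ x ∈ J, (∫⁻ y, ENNReal.ofReal (φ.normed volume (x - y)) * G y) ^ p
      ≤ ∫⁻ y, ENNReal.ofReal (φ.normed volume (x - y)) * A.indicator (fun y => G y ^ p) y := by
    intro x hx
    have hm : AEMeasurable (fun y => ENNReal.ofReal (φ.normed volume (x - y))) :=
      ((measurable_normed φ).comp (measurable_const.sub measurable_id)).aemeasurable
    set μ := (volume : Measure (Euc d)).withDensity
      (fun y => ENNReal.ofReal (φ.normed volume (x - y))) with hμ
    have hμ1 : μ univ = 1 := by
      rw [hμ, withDensity_apply _ MeasurableSet.univ, Measure.restrict_univ, lint_normed]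
    have hGμ : AEMeasurable G μ := hG.mono_ac (withDensity_absolutelyContinuous _ _)
    have h := lint_holder μ hp G hGμ
    rw [hμ1, ENNReal.one_rpow, one_mul] at h
    have h2 : (∫⁻ y, G y ∂μ) ^ p ≤ ∫⁻ y, G y ^ p ∂μ := by
      calc (∫⁻ y, G y ∂μ) ^ p ≤ ((∫⁻ y, G y ^ p ∂μ) ^ (1 / p)) ^ p :=
            ENNReal.rpow_le_rpow h hp0.le
        _ = _ := by rw [← ENNReal.rpow_mul, one_div_mul_cancel hp0.ne', ENNReal.rpow_one]
    rw [hμ, lintegral_withDensity_eq_lintegral_mul₀ hm hG,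
      lintegral_withDensity_eq_lintegral_mul₀ hm (hG.pow_const p)] at h2
    refine h2.trans (lintegral_mono fun y => ?_)
    simp only [Pi.mul_apply]
    by_cases hy : y ∈ A
    · rw [indicator_of_mem hy]
    · have : φ.normed volume (x - y) = 0 := by
        by_contra h0
        have h1 : x - y ∈ Function.support (φ.normed volume) := h0
        rw [φ.support_normed_eq, mem_ball_zero_iff, ← dist_eq_norm] at h1
        exact hy (hJA x hx y h1)
      rw [this]; simp
  calc ∫⁻ x in J, (∫⁻ y, ENNReal.ofReal (φ.normed volume (x - y)) * G y) ^ p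
      ≤ ∫⁻ x in J, ∫⁻ y, ENNReal.ofReal (φ.normed volume (x - y))
          * A.indicator (fun y => G y ^ p) y := setLIntegral_mono' hJ key
    _ ≤ ∫⁻ x, ∫⁻ y, ENNReal.ofReal (φ.normed volume (x - y))
          * A.indicator (fun y => G y ^ p) y := setLIntegral_le_lintegral _ _
    _ = ∫⁻ y, ∫⁻ x, ENNReal.ofReal (φ.normed volume (x - y))
          * A.indicator (fun y => G y ^ p) y := by
        apply lintegral_lintegral_swap
        apply AEMeasurable.mul
        · exact ((measurable_normed φ).comp (measurable_fst.sub measurable_snd)).aemeasurable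
        · exact ((hG.pow_const p).indicator hA).comp_snd
    _ = ∫⁻ y, A.indicator (fun y => G y ^ p) y := by
        refine lintegral_congr fun y => ?_
        have hmm : Measurable (fun x : Euc d => ENNReal.ofReal (φ.normed volume (x - y))) :=
          (measurable_normed φ).comp (measurable_id.sub measurable_const)
        rw [lintegral_mul_const _ hmm, lint_normed', one_mul]
    _ = _ := lintegral_indicator hA _

lemma opnorm_entries {d m : ℕ} (T : Euc d →L[ℝ] Euc m) {B : ℝ≥0∞}
    (h : ∀ i j, ‖T (EuclideanSpace.single j 1) i‖ₑ ≤ B) :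
    ‖T‖ₑ ≤ (m * d : ℝ≥0∞) * B := by
  by_cases hB : B = ⊤
  · subst hB
    rcases Nat.eq_zero_or_pos m with rfl | hm
    · have : T = 0 := by ext x i; exact i.elim0
      rw [this, ← ofReal_norm, norm_zero]; simp
    rcases Nat.eq_zero_or_pos d with rfl | hd
    · have : T = 0 := by
        ext x i
        have : x = 0 := Subsingleton.elim _ _
        simp [this]
      rw [this, ← ofReal_norm, norm_zero]; simp
    have : (m * d : ℝ≥0∞) ≠ 0 := by
      simp; omega
    rw [ENNReal.mul_top this]; exact le_top
  lift B to ℝ≥0 using hB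
  have h' : ∀ i j, ‖T (EuclideanSpace.single j 1) i‖ ≤ B := fun i j => by
    have := h i j
    rw [← ofReal_norm, ← ENNReal.ofReal_coe_nnreal] at this
    exact (ENNReal.ofReal_le_ofReal_iff B.2).1 this
  have hb : ‖T‖ ≤ m * d * B := by
    refine T.opNorm_le_bound (by positivity) fun v => ?_
    have hv : T v = ∑ j, v j • T (EuclideanSpace.single j 1) := by
      conv_lhs => rw [← (EuclideanSpace.basisFun (Fin d) ℝ).sum_repr v]
      simp
    have hc : ∀ j, ‖T (EuclideanSpace.single j 1)‖ ≤ m * B := by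
      intro j
      have h1 : T (EuclideanSpace.single j 1) = ∑ i, (T (EuclideanSpace.single j 1) i) •
          (EuclideanSpace.single i (1:ℝ) : Euc m) := by
        conv_lhs => rw [← (EuclideanSpace.basisFun (Fin m) ℝ).sum_repr (T (EuclideanSpace.single j 1))]
        simp
      rw [h1]
      refine (norm_sum_le _ _).trans ?_
      refine (Finset.sum_le_sum (g := fun _ => (B:ℝ)) fun i _ => ?_).trans (by simp)
      rw [norm_smul]; simpa using h' i j
    rw [hv]
    refine (norm_sum_le _ _).trans ?_
    refine (Finset.sum_le_sum (g := fun _ => ‖v‖ * (m * B)) fun j _ => ?_).trans ?_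
    · rw [norm_smul]
      exact mul_le_mul (PiLp.norm_apply_le v j) (hc j) (norm_nonneg _) (norm_nonneg _)
    · simp; apply le_of_eq; ring
  rw [← ofReal_norm]
  refine (ENNReal.ofReal_le_ofReal hb).trans ?_
  rw [ENNReal.ofReal_mul (by positivity), ENNReal.ofReal_mul (by positivity)]
  simp

lemma abs_le_frob {m d : ℕ} (ξ : Mat m d) (i j) : |ξ i j| ≤ frobNorm ξ := by
  rw [frobNorm, ← Real.sqrt_sq_eq_abs]
  apply Real.sqrt_le_sqrt
  refine (Finset.single_le_sum (f := fun j => ξ i j ^ 2) (fun _ _ => sq_nonneg _)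
    (Finset.mem_univ j)).trans ?_
  exact Finset.single_le_sum (f := fun i => ∑ j, ξ i j ^ 2)
    (fun _ _ => Finset.sum_nonneg fun _ _ => sq_nonneg _) (Finset.mem_univ i)

lemma continuous_frob {m d : ℕ} : Continuous (frobNorm : Mat m d → ℝ) := by
  unfold frobNorm
  fun_prop

lemma moll_deriv {d m : ℕ} {x₀ : Euc d} {R : ℝ} {u : Euc d → Euc m} {Du : Euc d → Mat m d}
    (hu : IntegrableOn u (ball x₀ R)) (hw : IsWeakJacobianOn (ball x₀ R) u Du)
    (φ : ContDiffBump (0 : Euc d)) (x : Euc d) (hx : dist x x₀ + φ.rOut < R) (i : Fin m) (j : Fin d) :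
    fderiv ℝ (convolution (φ.normed volume) ((ball x₀ R).indicator u)
      (ContinuousLinearMap.lsmul ℝ ℝ) volume) x (EuclideanSpace.single j 1) i
      = ∫ y in ball x₀ R, Du y i j * φ.normed volume (x - y) := by
  have hU : LocallyIntegrable ((ball x₀ R).indicator u) volume :=
    ((integrable_indicator_iff measurableSet_ball).2 hu).locallyIntegrable
  have hc : HasCompactSupport (φ.normed volume) := φ.hasCompactSupport_normed
  have hφ : ContDiff ℝ (⊤ : ℕ∞) (φ.normed volume) := φ.contDiff_normed
  have hφ1 : ContDiff ℝ 1 (φ.normed volume) := φ.contDiff_normed (n := 1)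
  have hd := (hc.hasFDerivAt_convolution_left (ContinuousLinearMap.lsmul ℝ ℝ (E := Euc m)) hφ1 hU x).fderiv
  have hex := HasCompactSupport.convolutionExists_left (μ := volume)
    (ContinuousLinearMap.precompL (Euc d) (ContinuousLinearMap.lsmul ℝ ℝ (E := Euc m)))
    (hc.fderiv ℝ) (hφ1.continuous_fderiv one_ne_zero) hU x
  have hInt0 := hex.integrable_swap
  have hT := ((EuclideanSpace.proj i : Euc m →L[ℝ] ℝ).comp
    (ContinuousLinearMap.apply ℝ (Euc m) (EuclideanSpace.single j (1:ℝ) : Euc d))).integral_comp_comm hInt0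
  rw [hd, convolution_eq_swap]
  refine Eq.trans hT.symm ?_
  have h1 := hw (fun y => φ.normed volume (x - y)) (hφ.comp (contDiff_const.sub contDiff_id)) ?_ ?_ i j
  · rw [eq_neg_iff_add_eq_zero, add_comm, ← eq_neg_iff_add_eq_zero] at h1
    rw [h1, ← integral_neg, ← integral_indicator measurableSet_ball]
    refine integral_congr_ae (Eventually.of_forall fun y => ?_)
    have hfd : fderiv ℝ (fun y => φ.normed volume (x - y)) y = - fderiv ℝ (φ.normed volume) (x - y) := by
      have e1 : HasFDerivAt (φ.normed volume) (fderiv ℝ (φ.normed volume) (x - y)) (x - y) :=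
        ((hφ1.differentiable one_ne_zero) _).hasFDerivAt
      have e2 : HasFDerivAt (fun y : Euc d => x - y) (-(ContinuousLinearMap.id ℝ (Euc d))) y :=
        (hasFDerivAt_id y).const_sub x
      have e3 := (e1.comp y e2).fderiv
      refine Eq.trans e3 ?_
      ext v
      simp
    by_cases hy : y ∈ ball x₀ R
    · simp only [indicator_of_mem hy, hfd]
      simp
      ring
    · simp only [indicator_of_notMem hy]
      simp
  · refine HasCompactSupport.intro (isCompact_closedBall x φ.rOut) fun y hy => ?_
    by_contra h0
    have h2 : x - y ∈ Function.support (φ.normed volume) := h0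
    rw [φ.support_normed_eq, mem_ball_zero_iff, ← dist_eq_norm] at h2
    exact hy (by rw [mem_closedBall, dist_comm]; exact h2.le)
  · have : tsupport (fun y => φ.normed volume (x - y)) ⊆ closedBall x φ.rOut := by
      refine closure_minimal (fun y hy => ?_) isClosed_closedBall
      have h2 : x - y ∈ Function.support (φ.normed volume) := hy
      rw [φ.support_normed_eq, mem_ball_zero_iff, ← dist_eq_norm] at h2
      rw [mem_closedBall, dist_comm]; exact h2.le
    refine this.trans fun y hy => ?_
    rw [mem_closedBall] at hy
    rw [mem_ball]
    linarith [dist_triangle y x x₀]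

/-- mollification -/
lemma moll {d m : ℕ} {x₀ : Euc d} {R p : ℝ} (hp : 1 ≤ p) {u : Euc d → Euc m} {Du : Euc d → Mat m d}
    (h : MemW1p (ball x₀ R) (ENNReal.ofReal p) u Du) :
    ∃ (f : ℕ → Euc d → Euc m) (ε : ℕ → ℝ), (∀ k, ContDiff ℝ 1 (f k)) ∧ (∀ k, 0 < ε k) ∧
      Tendsto ε atTop (𝓝 0) ∧
      (∀ᵐ x, x ∈ ball x₀ R → Tendsto (fun k => f k x) atTop (𝓝 (u x))) ∧
      ∀ k ρ, (∫⁻ x in {x | ρ + ε k < dist x x₀ ∧ dist x x₀ + ε k < R}, ‖f k x‖ₑ ^ p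
          ≤ ∫⁻ x in ball x₀ R \ ball x₀ ρ, ‖u x‖ₑ ^ p) ∧
        (∫⁻ x in {x | ρ + ε k < dist x x₀ ∧ dist x x₀ + ε k < R}, ‖fderiv ℝ (f k) x‖ₑ ^ p
          ≤ (m * d : ℝ≥0∞) ^ p *
            ∫⁻ x in ball x₀ R \ ball x₀ ρ, ENNReal.ofReal (frobNorm (Du x)) ^ p) := by
  obtain ⟨hu, hDu, hw⟩ := h
  have hp0 : 0 < p := by linarith
  have hp1 : (1 : ℝ≥0∞) ≤ ENNReal.ofReal p := by rwa [ENNReal.one_le_ofReal]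
  have hfin : IsFiniteMeasure ((volume : Measure (Euc d)).restrict (ball x₀ R)) :=
    ⟨by rw [Measure.restrict_apply_univ]; exact measure_ball_lt_top⟩
  have hui : IntegrableOn u (ball x₀ R) := hu.integrable hp1
  let φ : ℕ → ContDiffBump (0 : Euc d) := fun k =>
    ⟨1 / ((k:ℝ) + 1) / 2, 1 / ((k:ℝ) + 1), by positivity, by
      have : 0 < 1 / ((k:ℝ) + 1) := by positivity
      linarith⟩
  have hφ : ∀ k, (φ k).rOut = 1 / ((k:ℝ) + 1) := fun k => rfl
  have hφ' : ∀ k, (φ k).rIn = 1 / ((k:ℝ) + 1) / 2 := fun k => rfl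
  have ht : Tendsto (fun k => (φ k).rOut) atTop (𝓝 0) := tendsto_one_div_add_atTop_nhds_zero_nat
  have hU : LocallyIntegrable ((ball x₀ R).indicator u) volume :=
    ((integrable_indicator_iff measurableSet_ball).2 hui).locallyIntegrable
  have hsupp : ∀ k ρ, ∀ x ∈ {x | ρ + (φ k).rOut < dist x x₀ ∧ dist x x₀ + (φ k).rOut < R}, ∀ y,
      dist x y < (φ k).rOut → y ∈ ball x₀ R \ ball x₀ ρ := by
    rintro k ρ x ⟨h1, h2⟩ y hy
    refine ⟨?_, fun hy2 => ?_⟩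
    · rw [mem_ball]; linarith [dist_triangle_left y x₀ x]
    · rw [mem_ball] at hy2; linarith [dist_triangle x y x₀]
  have hJ : ∀ k ρ, MeasurableSet {x | ρ + (φ k).rOut < dist x x₀ ∧ dist x x₀ + (φ k).rOut < R} := by
    intro k ρ
    refine MeasurableSet.inter ?_ ?_
    · exact measurableSet_lt measurable_const (measurable_id.dist measurable_const)
    · exact measurableSet_lt ((measurable_id.dist measurable_const).add_const _) measurable_const
  have hA : ∀ ρ, MeasurableSet (ball x₀ R \ ball x₀ ρ) := fun ρ =>
    measurableSet_ball.diff measurableSet_ball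
  refine ⟨fun k => convolution ((φ k).normed volume) ((ball x₀ R).indicator u)
      (ContinuousLinearMap.lsmul ℝ ℝ) volume, fun k => (φ k).rOut, fun k => ?_, fun k => (φ k).rOut_pos,
      ht, ?_, fun k ρ => ⟨?_, ?_⟩⟩
  · exact HasCompactSupport.contDiff_convolution_left (n := 1) _ (φ k).hasCompactSupport_normed
      ((φ k).contDiff_normed (n := 1)) hU
  · have := ContDiffBump.ae_convolution_tendsto_right_of_locallyIntegrable (K := 2) ht
      (Eventually.of_forall fun k => by rw [hφ, hφ']; linarith) hU
    filter_upwards [this] with x hx hxb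
    rwa [indicator_of_mem hxb] at hx
  · have hG : AEMeasurable (fun y => ‖(ball x₀ R).indicator u y‖ₑ) :=
      ((aestronglyMeasurable_indicator_iff measurableSet_ball).2 hu.1).enorm
    have h1 := moll_jensen (φ k) hp hG _ _ (hJ k ρ) (hA ρ) (hsupp k ρ)
    refine (lintegral_mono fun x => ?_).trans (h1.trans (le_of_eq ?_))
    · refine ENNReal.rpow_le_rpow ?_ hp0.le
      simp only [convolution_eq_swap]
      refine (enorm_integral_le_lintegral_enorm _).trans (lintegral_mono fun y => ?_)
      simp only [ContinuousLinearMap.lsmul_apply]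
      rw [enorm_smul, Real.enorm_of_nonneg ((φ k).nonneg_normed _)]
    · refine setLIntegral_congr_fun (hA ρ) fun y hy => ?_
      simp only [indicator_of_mem hy.1]
  · have hG : AEMeasurable (fun y => (ball x₀ R).indicator
        (fun y => ENNReal.ofReal (frobNorm (Du y))) y) := by
      refine (aemeasurable_indicator_iff measurableSet_ball).2 ?_
      exact (continuous_frob.measurable.comp_aemeasurable hDu.1.aemeasurable).ennreal_ofReal
    have h1 := moll_jensen (φ k) hp hG _ _ (hJ k ρ) (hA ρ) (hsupp k ρ)
    have h2 : ∫⁻ y in ball x₀ R \ ball x₀ ρ, (ball x₀ R).indicator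
        (fun y => ENNReal.ofReal (frobNorm (Du y))) y ^ p
        = ∫⁻ x in ball x₀ R \ ball x₀ ρ, ENNReal.ofReal (frobNorm (Du x)) ^ p := by
      refine setLIntegral_congr_fun (hA ρ) fun y hy => ?_
      simp only [indicator_of_mem hy.1]
    rw [← h2]
    refine le_trans ?_ (mul_le_mul_right h1 _)
    rw [← lintegral_const_mul' _ _ (ENNReal.rpow_ne_top_of_nonneg hp0.le (by finiteness))]
    refine setLIntegral_mono' (hJ k ρ) fun x hx => ?_
    rw [← ENNReal.mul_rpow_of_nonneg _ _ hp0.le]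
    refine ENNReal.rpow_le_rpow ?_ hp0.le
    refine opnorm_entries _ fun i j => ?_
    rw [moll_deriv hui hw (φ k) x hx.2 i j]
    refine (enorm_integral_le_lintegral_enorm _).trans ?_
    rw [← lintegral_indicator measurableSet_ball]
    refine lintegral_mono fun y => ?_
    by_cases hy : y ∈ ball x₀ R
    · simp only [indicator_of_mem hy]
      rw [enorm_mul, Real.enorm_of_nonneg ((φ k).nonneg_normed _), mul_comm]
      refine mul_le_mul_right ?_ _
      rw [← ofReal_norm]
      exact ENNReal.ofReal_le_ofReal (abs_le_frob _ i j)
    · simp only [indicator_of_notMem hy]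
      exact zero_le


lemma chart_lower' {n : ℕ} (j : Fin (n + 1)) {s : ℝ} (hs : |s| = 1) (x₀ : Euc (n + 1))
    (F : Euc (n + 1) → ℝ≥0∞) (hF : Measurable F) :
    ∫⁻ r in Ioi (0:ℝ), ∫⁻ y in closedBall (0 : Fin n → ℝ) 2,
        ENNReal.ofReal (r ^ n) * F (x₀ + r • ph j s y) ≤
      ENNReal.ofReal ((2 * n + 1) ^ (n + 1)) * ∫⁻ x, F x := by
  have h := chart_lower j hs (fun x => F (x₀ + x)) (hF.comp (measurable_const.add measurable_id))
  rwa [lintegral_add_left_eq_self] at h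

lemma chart_upper' {n : ℕ} (x₀ : Euc (n + 1)) (F : Euc (n + 1) → ℝ≥0∞) (hF : Measurable F) :
    ∫⁻ x, F x ≤ ∑ k : Fin (n + 1) × Bool,
      ∫⁻ r in Ioi (0:ℝ), ∫⁻ y in closedBall (0 : Fin n → ℝ) 1,
        ENNReal.ofReal (r ^ n) * F (x₀ + r • ph k.1 (sg k.2) y) := by
  have h := chart_upper (fun x => F (x₀ + x)) (hF.comp (measurable_const.add measurable_id))
  rwa [lintegral_add_left_eq_self] at h

lemma measurable_chart {n : ℕ} (j : Fin (n + 1)) {s : ℝ} (hs : |s| = 1) (x₀ : Euc (n + 1)) :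
    Measurable (fun a : ℝ × (Fin n → ℝ) => x₀ + a.1 • ph j s a.2) :=
  measurable_const.add (measurable_fst.smul ((measurable_ph j hs).comp measurable_snd))

lemma chart_ae {n : ℕ} (j : Fin (n + 1)) {s : ℝ} (hs : |s| = 1) (x₀ : Euc (n + 1))
    {P : Euc (n + 1) → Prop} (hP : ∀ᵐ x, P x) :
    ∀ᵐ r : ℝ, 0 < r → ∀ᵐ y ∂((volume : Measure (Fin n → ℝ)).restrict (closedBall 0 2)),
      P (x₀ + r • ph j s y) := by
  set T := toMeasurable volume {x | ¬ P x} with hT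
  have hT0 : volume T = 0 := by rw [hT, measure_toMeasurable]; exact hP
  have hTm : MeasurableSet T := measurableSet_toMeasurable _ _
  have hF : Measurable (T.indicator (fun _ => (1:ℝ≥0∞))) := measurable_const.indicator hTm
  have h := chart_lower' j hs x₀ _ hF
  rw [lintegral_indicator hTm, setLIntegral_one, hT0, mul_zero, nonpos_iff_eq_zero] at h
  have hm : Measurable (fun a : ℝ × (Fin n → ℝ) => ENNReal.ofReal (a.1 ^ n)
      * T.indicator (fun _ => (1:ℝ≥0∞)) (x₀ + a.1 • ph j s a.2)) := by
    apply Measurable.mul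
    · fun_prop
    · exact hF.comp (measurable_chart j hs x₀)
  rw [lintegral_eq_zero_iff (Measurable.lintegral_prod_right' hm)] at h
  have h' := (ae_restrict_iff' measurableSet_Ioi).1 h
  filter_upwards [h'] with r hr hr0
  have h2 := hr hr0
  simp only [Pi.zero_apply] at h2
  have hm2 : Measurable (fun y : Fin n → ℝ => ENNReal.ofReal (r ^ n)
      * T.indicator (fun _ => (1:ℝ≥0∞)) (x₀ + r • ph j s y)) :=
    hm.comp (measurable_const.prodMk measurable_id)
  rw [lintegral_eq_zero_iff hm2] at h2
  filter_upwards [h2] with y hy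
  simp only [Pi.zero_apply, mul_eq_zero, ENNReal.ofReal_eq_zero] at hy
  rcases hy with hy | hy
  · exact absurd hy (not_le.2 (pow_pos hr0 n))
  · by_contra hc
    have : x₀ + r • ph j s y ∈ T := subset_toMeasurable _ _ hc
    simp [this] at hy

lemma slice_sob (n m : ℕ) (p : ℝ) (q : ℝ≥0∞) (hp : 1 ≤ p)
    (hq1 : p < n → q ≤ ENNReal.ofReal (n * p / (n - p)))
    (hq2 : p = n → q < ⊤) (hq3 : n < p → q = ⊤) (hq : q ≠ 0)
    (j : Fin (n + 1)) {s : ℝ} (hs : |s| = 1) :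
    ∃ C : ℝ≥0∞, C ≠ ⊤ ∧ ∀ f : Euc (n + 1) → Euc m, ContDiff ℝ 1 f → ∀ x₀ (r R : ℝ), 0 < r → r < R →
      eLpNorm (fun y : Fin n → ℝ => f (x₀ + r • ph j s y)) q (volume.restrict (closedBall 0 1)) ≤
        (C * ∫⁻ y in closedBall (0 : Fin n → ℝ) 2,
          (ENNReal.ofReal R ^ p * ‖fderiv ℝ f (x₀ + r • ph j s y)‖ₑ ^ p
            + ‖f (x₀ + r • ph j s y)‖ₑ ^ p)) ^ (1 / p) := by
  have hp0 : 0 < p := by linarith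
  obtain ⟨C, hC, hsob⟩ := sobolev_local n m p q hp hq1 hq2 hq3 hq
  have hph : ContDiff ℝ 1 (ph j s : (Fin n → ℝ) → _) := (contDiff_ph j hs).of_le (by exact_mod_cast le_top)
  have hcont : Continuous (fun y : Fin n → ℝ => ‖fderiv ℝ (ph j s) y‖) :=
    (hph.continuous_fderiv one_ne_zero).norm
  obtain ⟨K, hK⟩ := (isCompact_closedBall (0 : Fin n → ℝ) 2).exists_bound_of_continuousOn hcont.continuousOn
  set K' : ℝ := max K 1 with hK'
  have hK1 : 1 ≤ K' := le_max_right _ _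
  refine ⟨C ^ p * ENNReal.ofReal K' ^ p, by finiteness, fun f hf x₀ r R hr hrR => ?_⟩
  have hv : ContDiff ℝ 1 (fun y : Fin n → ℝ => f (x₀ + r • ph j s y)) :=
    hf.comp (contDiff_const.add (hph.const_smul r))
  refine (hsob _ hv).trans ?_
  rw [mul_assoc, ENNReal.mul_rpow_of_nonneg _ _ (by positivity), ← ENNReal.rpow_mul,
    mul_one_div_cancel hp0.ne', ENNReal.rpow_one]
  refine mul_le_mul_right (ENNReal.rpow_le_rpow ?_ (by positivity)) _
  rw [← lintegral_const_mul' _ _ (by finiteness)]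
  refine setLIntegral_mono' measurableSet_closedBall fun y hy => ?_
  have hfd : HasFDerivAt (fun y : Fin n → ℝ => f (x₀ + r • ph j s y))
      ((fderiv ℝ f (x₀ + r • ph j s y)).comp (r • fderiv ℝ (ph j s) y)) y := by
    have e1 := (hf.differentiable one_ne_zero (x₀ + r • ph j s y)).hasFDerivAt
    have e2 := ((hph.differentiable one_ne_zero y).hasFDerivAt.const_smul r).const_add x₀
    exact e1.comp y e2
  have hn : ‖fderiv ℝ (fun y : Fin n → ℝ => f (x₀ + r • ph j s y)) y‖
      ≤ K' * (R * ‖fderiv ℝ f (x₀ + r • ph j s y)‖) := by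
    rw [hfd.fderiv]
    refine (ContinuousLinearMap.opNorm_comp_le _ _).trans ?_
    rw [norm_smul, Real.norm_of_nonneg hr.le]
    have h1 : ‖fderiv ℝ (ph j s) y‖ ≤ K' := by
      have := hK y hy
      rw [norm_norm] at this
      exact this.trans (le_max_left _ _)
    have h2 : r * ‖fderiv ℝ (ph j s) y‖ ≤ R * K' :=
      mul_le_mul hrR.le h1 (norm_nonneg _) (hr.le.trans hrR.le)
    calc _ ≤ ‖fderiv ℝ f (x₀ + r • ph j s y)‖ * (R * K') :=
          mul_le_mul_of_nonneg_left h2 (norm_nonneg _)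
      _ = _ := by ring
  rw [mul_add]
  refine add_le_add ?_ ?_
  · rw [← ENNReal.mul_rpow_of_nonneg _ _ hp0.le, ← ENNReal.mul_rpow_of_nonneg _ _ hp0.le]
    refine ENNReal.rpow_le_rpow ?_ hp0.le
    rw [← ofReal_norm, ← ofReal_norm, ← ENNReal.ofReal_mul (hr.le.trans hrR.le),
      ← ENNReal.ofReal_mul (by positivity)]
    exact ENNReal.ofReal_le_ofReal hn
  · refine le_mul_of_one_le_left zero_le ?_
    exact ENNReal.one_le_rpow (by rwa [ENNReal.one_le_ofReal]) hp0

lemma mixed1 (n m : ℕ) (p : ℝ) (q : ℝ≥0∞) (hp : 1 ≤ p)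
    (hq1 : p < n → q ≤ ENNReal.ofReal (n * p / (n - p)))
    (hq2 : p = n → q < ⊤) (hq3 : n < p → q = ⊤) (hq : q ≠ 0)
    (j : Fin (n + 1)) {s : ℝ} (hs : |s| = 1) :
    ∃ C : ℝ≥0∞, C ≠ ⊤ ∧ ∀ (x₀ : Euc (n + 1)) (R : ℝ), 0 < R →
      ∀ (u : Euc (n + 1) → Euc m) (Du : Euc (n + 1) → Mat m (n + 1)),
      MemW1p (ball x₀ R) (ENNReal.ofReal p) u Du → ∀ δ : ℝ, 0 < δ → δ ≤ 1 / 2 →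
      ∃ g : ℝ → ℝ≥0∞, Measurable g ∧
        ∫⁻ r in Ioo ((1 - δ) * R) R, g r ≤ C * (ENNReal.ofReal (R ^ n))⁻¹ *
          ∫⁻ x in ball x₀ R \ ball x₀ ((1 - δ) * R),
            (ENNReal.ofReal R ^ p * ENNReal.ofReal (frobNorm (Du x)) ^ p + ‖u x‖ₑ ^ p) ∧
        ∀ᵐ r, r ∈ Ioo ((1 - δ) * R) R →
          eLpNorm (fun y : Fin n → ℝ => u (x₀ + r • ph j s y)) q (volume.restrict (closedBall 0 1))
            ≤ g r ^ (1 / p) := by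
  have hp0 : 0 < p := by linarith
  obtain ⟨C, hC, hsl⟩ := slice_sob n m p q hp hq1 hq2 hq3 hq j hs
  set D : ℝ≥0∞ := ((m : ℝ≥0∞) * ((n + 1 : ℕ) : ℝ≥0∞)) ^ p with hD
  have hDt : D ≠ ⊤ := by rw [hD]; finiteness
  refine ⟨C * (ENNReal.ofReal (2 ^ n) * (ENNReal.ofReal ((2 * n + 1) ^ (n + 1)) * (D + 1))),
    by finiteness, fun x₀ R hR u Du h δ hδ hδ2 => ?_⟩
  obtain ⟨f, ε, hf, hε, hεt, hlim, hbd⟩ := moll hp h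
  set ρ := (1 - δ) * R with hρ
  have hρR : R / 2 ≤ ρ := by rw [hρ]; nlinarith
  have hρ0 : 0 < ρ := by linarith
  set E : ℕ → Set (Euc (n + 1)) := fun l => {x | ρ + ε l < dist x x₀ ∧ dist x x₀ + ε l < R} with hE
  have hEm : ∀ l, MeasurableSet (E l) := by
    intro l
    refine MeasurableSet.inter ?_ ?_
    · exact measurableSet_lt measurable_const (measurable_id.dist measurable_const)
    · exact measurableSet_lt ((measurable_id.dist measurable_const).add_const _) measurable_const
  set H : ℕ → Euc (n + 1) → ℝ≥0∞ := fun l x =>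
    ENNReal.ofReal R ^ p * ‖fderiv ℝ (f l) x‖ₑ ^ p + ‖f l x‖ₑ ^ p with hH
  have hHm1 : ∀ l, Measurable (fun x => ENNReal.ofReal R ^ p * ‖fderiv ℝ (f l) x‖ₑ ^ p) := by
    intro l
    have : Continuous (fun x => fderiv ℝ (f l) x) := (hf l).continuous_fderiv one_ne_zero
    exact ((this.enorm.measurable).pow_const p).const_mul _
  have hHm : ∀ l, Measurable (H l) := by
    intro l
    exact (hHm1 l).add (((hf l).continuous.enorm.measurable).pow_const p)
  have hFm : ∀ l, Measurable ((E l).indicator (H l)) := fun l => (hHm l).indicator (hEm l)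
  have hFc : ∀ l, Measurable (fun a : ℝ × (Fin n → ℝ) =>
      (E l).indicator (H l) (x₀ + a.1 • ph j s a.2)) := fun l => (hFm l).comp (measurable_chart j hs x₀)
  set G : ℕ → ℝ → ℝ≥0∞ := fun l r => C * ∫⁻ y in closedBall (0 : Fin n → ℝ) 2,
    (E l).indicator (H l) (x₀ + r • ph j s y) with hG
  have hGm : ∀ l, Measurable (G l) := fun l => (Measurable.lintegral_prod_right' (hFc l)).const_mul _
  set M := ∫⁻ x in ball x₀ R \ ball x₀ ρ,
            (ENNReal.ofReal R ^ p * ENNReal.ofReal (frobNorm (Du x)) ^ p + ‖u x‖ₑ ^ p) with hM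
  have hA : MeasurableSet (ball x₀ R \ ball x₀ ρ) := measurableSet_ball.diff measurableSet_ball
  have hEH : ∀ l, ∫⁻ x in E l, H l x ≤ (D + 1) * M := by
    intro l
    obtain ⟨b1, b2⟩ := hbd l ρ
    have hsplit : M = ENNReal.ofReal R ^ p *
        (∫⁻ x in ball x₀ R \ ball x₀ ρ, ENNReal.ofReal (frobNorm (Du x)) ^ p) +
        ∫⁻ x in ball x₀ R \ ball x₀ ρ, ‖u x‖ₑ ^ p := by
      rw [hM, lintegral_add_right', lintegral_const_mul' _ _ (by finiteness)]
      exact (h.1.1.mono_measure (Measure.restrict_mono sdiff_subset le_rfl)).enorm.pow_const p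
    rw [hH]
    simp only
    rw [lintegral_add_left (hHm1 l), lintegral_const_mul' _ _ (by finiteness), hsplit]
    set a := ∫⁻ x in ball x₀ R \ ball x₀ ρ, ENNReal.ofReal (frobNorm (Du x)) ^ p
    set b := ∫⁻ x in ball x₀ R \ ball x₀ ρ, ‖u x‖ₑ ^ p
    calc _ ≤ ENNReal.ofReal R ^ p * (D * a) + b := add_le_add (mul_le_mul_right b2 _) b1
      _ ≤ ENNReal.ofReal R ^ p * (D * a) + b + (D * b + ENNReal.ofReal R ^ p * a) := le_self_add
      _ = _ := by ring
  have hGi : ∀ l, ∫⁻ r in Ioo ρ R, G l r ≤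
      C * (ENNReal.ofReal (2 ^ n) * (ENNReal.ofReal ((2 * n + 1) ^ (n + 1)) * (D + 1)))
        * (ENNReal.ofReal (R ^ n))⁻¹ * M := by
    intro l
    have hw : ∀ r ∈ Ioo ρ R, G l r ≤ C * (ENNReal.ofReal (2 ^ n) * (ENNReal.ofReal (R ^ n))⁻¹ *
        ∫⁻ y in closedBall (0 : Fin n → ℝ) 2,
          ENNReal.ofReal (r ^ n) * (E l).indicator (H l) (x₀ + r • ph j s y)) := by
      intro r hr
      refine mul_le_mul_right ?_ _
      rw [lintegral_const_mul' _ _ ENNReal.ofReal_ne_top, ← mul_assoc]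
      refine le_mul_of_one_le_left zero_le ?_
      rw [← ENNReal.ofReal_inv_of_pos (by positivity), ← ENNReal.ofReal_mul (by positivity),
        ← ENNReal.ofReal_mul (by positivity), ENNReal.one_le_ofReal, ← inv_pow, ← mul_pow, ← mul_pow]
      refine one_le_pow₀ ?_
      have : R ≤ 2 * r := by linarith [hr.1]
      rw [mul_assoc, ← div_eq_inv_mul, mul_div_assoc', le_div_iff₀ hR]
      linarith
    refine (setLIntegral_mono' measurableSet_Ioo hw).trans ?_
    rw [lintegral_const_mul' _ _ hC, lintegral_const_mul' _ _ (by
      refine ENNReal.mul_ne_top ENNReal.ofReal_ne_top (ENNReal.inv_ne_top.2 ?_)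
      simp; positivity)]
    have h1 : ∫⁻ r in Ioo ρ R, ∫⁻ y in closedBall (0 : Fin n → ℝ) 2,
          ENNReal.ofReal (r ^ n) * (E l).indicator (H l) (x₀ + r • ph j s y) ≤
        ENNReal.ofReal ((2 * n + 1) ^ (n + 1)) * ((D + 1) * M) := by
      refine (lintegral_mono_set (fun r hr => lt_trans hρ0 hr.1)).trans
        ((chart_lower' j hs x₀ _ (hFm l)).trans ?_)
      rw [lintegral_indicator (hEm l)]
      exact mul_le_mul_right (hEH l) _
    refine (mul_le_mul_right (mul_le_mul_right h1 _) _).trans (le_of_eq ?_)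
    ring
  refine ⟨fun r => liminf (fun l => G l r) atTop, Measurable.liminf hGm, ?_, ?_⟩
  · refine (lintegral_liminf_le hGm).trans ?_
    exact liminf_le_of_le (by isBoundedDefault) fun b hb => by
      obtain ⟨l, hl⟩ := hb.exists
      exact hl.trans (hGi l)
  · filter_upwards [chart_ae j hs x₀ hlim] with r hr hrI
    have hr0 : 0 < r := hρ0.trans hrI.1
    have hdist : ∀ y : Fin n → ℝ, dist (x₀ + r • ph j s y) x₀ = r := fun y => by
      rw [dist_eq_norm, add_sub_cancel_left, norm_smul, norm_ph j hs, Real.norm_of_nonneg hr0.le, mul_one]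
    have hle : eLpNorm (fun y : Fin n → ℝ => u (x₀ + r • ph j s y)) q (volume.restrict (closedBall 0 1)) ≤
        liminf (fun l => eLpNorm (fun y : Fin n → ℝ => f l (x₀ + r • ph j s y)) q
          (volume.restrict (closedBall 0 1))) atTop := by
      refine Lp.eLpNorm_lim_le_liminf_eLpNorm (fun l => ?_) _ ?_
      · have : Continuous (fun y : Fin n → ℝ => f l (x₀ + r • ph j s y)) :=
          (hf l).continuous.comp (continuous_const.add ((contDiff_ph j hs).continuous.const_smul r))
        exact this.aestronglyMeasurable
      · have hmono : (volume : Measure (Fin n → ℝ)).restrict (closedBall 0 1) ≤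
            volume.restrict (closedBall 0 2) :=
          Measure.restrict_mono (closedBall_subset_closedBall (by norm_num)) le_rfl
        filter_upwards [ae_mono hmono (hr hr0)] with y hy
        exact hy (by rw [mem_ball, hdist]; exact hrI.2)
    have hev : ∀ᶠ l in atTop, eLpNorm (fun y : Fin n → ℝ => f l (x₀ + r • ph j s y)) q
          (volume.restrict (closedBall 0 1)) ≤ G l r ^ (1 / p) := by
      have h1 : ∀ᶠ l in atTop, ε l < min (r - ρ) (R - r) :=
        hεt.eventually_lt_const (lt_min (by linarith [hrI.1]) (by linarith [hrI.2]))
      filter_upwards [h1] with l hl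
      refine (hsl (f l) (hf l) x₀ r R hr0 hrI.2).trans (le_of_eq ?_)
      rw [hG]
      simp only
      congr 2
      refine lintegral_congr fun y => ?_
      have hmem : x₀ + r • ph j s y ∈ E l := by
        have := lt_min_iff.1 hl
        rw [hE]
        simp only [mem_ofPred_eq, hdist]
        constructor <;> linarith [this.1, this.2]
      rw [indicator_of_mem hmem]
    refine hle.trans ((liminf_le_liminf hev).trans (le_of_eq ?_))
    have := (ENNReal.orderIsoRpow (1 / p) (by positivity)).liminf_apply (f := atTop) (u := fun l => G l r)
    simpa using this.symm

lemma mixed (n m : ℕ) (p : ℝ) (q : ℝ≥0∞) (hp : 1 ≤ p)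
    (hq1 : p < n → q ≤ ENNReal.ofReal (n * p / (n - p)))
    (hq2 : p = n → q < ⊤) (hq3 : n < p → q = ⊤) (hq : q ≠ 0) :
    ∃ C : ℝ≥0∞, C ≠ ⊤ ∧ ∀ (x₀ : Euc (n + 1)) (R : ℝ), 0 < R →
      ∀ (u : Euc (n + 1) → Euc m) (Du : Euc (n + 1) → Mat m (n + 1)),
      MemW1p (ball x₀ R) (ENNReal.ofReal p) u Du → ∀ δ : ℝ, 0 < δ → δ ≤ 1 / 2 →
      ∀ k : Fin (n + 1) × Bool, ∃ g : ℝ → ℝ≥0∞, Measurable g ∧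
        ∫⁻ r in Ioo ((1 - δ) * R) R, g r ≤ C * (ENNReal.ofReal (R ^ n))⁻¹ *
          ∫⁻ x in ball x₀ R \ ball x₀ ((1 - δ) * R),
            (ENNReal.ofReal R ^ p * ENNReal.ofReal (frobNorm (Du x)) ^ p + ‖u x‖ₑ ^ p) ∧
        ∀ᵐ r, r ∈ Ioo ((1 - δ) * R) R →
          eLpNorm (fun y : Fin n → ℝ => u (x₀ + r • ph k.1 (sg k.2) y)) q
            (volume.restrict (closedBall 0 1)) ≤ g r ^ (1 / p) := by
  choose C hC hk using fun k : Fin (n + 1) × Bool =>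
    mixed1 n m p q hp hq1 hq2 hq3 hq k.1 (abs_sg k.2)
  refine ⟨∑ k, C k, ENNReal.sum_ne_top.2 fun k _ => hC k, fun x₀ R hR u Du h δ hδ hδ2 k => ?_⟩
  obtain ⟨g, hg, h1, h2⟩ := hk k x₀ R hR u Du h δ hδ hδ2
  refine ⟨g, hg, h1.trans ?_, h2⟩
  gcongr
  exact Finset.single_le_sum (f := C) (fun _ _ => zero_le) (Finset.mem_univ k)


lemma good_radii {ι : Type*} [Fintype ι] (g : ι → ℝ → ℝ≥0∞) (hg : ∀ i, Measurable (g i))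
    {a b : ℝ} (hab : a < b) (B : ι → ℝ≥0∞) (hB : ∀ i, B i ≠ ⊤)
    (hgB : ∀ i, ∫⁻ r in Ioo a b, g i r ≤ B i) :
    ∃ U : Set ℝ, MeasurableSet U ∧ U ⊆ Ioo a b ∧ (b - a) / 2 ≤ (volume U).toReal ∧
      ∀ r ∈ U, ∀ i, g i r ≤ ENNReal.ofReal (2 * (Fintype.card ι + 1) / (b - a)) * B i := by
  set Λ : ℝ := 2 * (Fintype.card ι + 1) / (b - a) with hΛ
  have hba : 0 < b - a := by linarith
  have hΛ0 : 0 < Λ := by positivity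
  set Bad : ι → Set ℝ := fun i => {r | ENNReal.ofReal Λ * B i < g i r} with hBad
  have hBm : ∀ i, MeasurableSet (Bad i) := fun i => measurableSet_lt measurable_const (hg i)
  have hbad : ∀ i, (volume.restrict (Ioo a b)) (Bad i) ≤ ENNReal.ofReal Λ⁻¹ := by
    intro i
    rcases eq_or_ne (B i) 0 with h0 | h0
    · have h1 : ∫⁻ r in Ioo a b, g i r = 0 := by
        have := hgB i; rw [h0] at this; exact nonpos_iff_eq_zero.1 this
      rw [lintegral_eq_zero_iff (hg i)] at h1
      have h2 : (volume.restrict (Ioo a b)) (Bad i) = 0 := by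
        refine measure_mono_null (fun r hr => ?_) h1
        have hr' : ENNReal.ofReal Λ * B i < g i r := hr
        rw [h0, mul_zero] at hr'
        exact hr'.ne'
      rw [h2]; exact zero_le
    · have hT : ENNReal.ofReal Λ * B i ≠ 0 := mul_ne_zero (by simpa using hΛ0) h0
      have hT2 : ENNReal.ofReal Λ * B i ≠ ⊤ := ENNReal.mul_ne_top ENNReal.ofReal_ne_top (hB i)
      have h1 := mul_meas_ge_le_lintegral (μ := volume.restrict (Ioo a b)) (hg i) (ENNReal.ofReal Λ * B i)
      have h2 : (volume.restrict (Ioo a b)) (Bad i) ≤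
          (volume.restrict (Ioo a b)) {r | ENNReal.ofReal Λ * B i ≤ g i r} :=
        measure_mono fun r (hr : ENNReal.ofReal Λ * B i < g i r) => hr.le
      refine h2.trans ?_
      have h3 := h1.trans (hgB i)
      rw [ENNReal.ofReal_inv_of_pos hΛ0]
      rw [mul_comm (ENNReal.ofReal Λ), mul_assoc] at h3
      have h4 := (ENNReal.mul_le_iff_le_inv h0 (hB i)).1 h3
      rw [ENNReal.inv_mul_cancel h0 (hB i)] at h4
      have h5 := (ENNReal.mul_le_iff_le_inv (by simpa using hΛ0) ENNReal.ofReal_ne_top).1 h4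
      simpa [mul_comm] using h5
  set V : Set ℝ := ⋃ i, Bad i with hV
  have hVm : MeasurableSet V := MeasurableSet.iUnion hBm
  have hVs : volume (Ioo a b ∩ V) ≤ ENNReal.ofReal ((b - a) / 2) := by
    have h1 : (volume.restrict (Ioo a b)) V ≤ ∑ i, (volume.restrict (Ioo a b)) (Bad i) :=
      measure_iUnion_fintype_le _ _
    rw [Measure.restrict_apply hVm, inter_comm] at h1
    refine h1.trans ((Finset.sum_le_sum fun i _ => hbad i).trans ?_)
    simp only [Finset.sum_const, Finset.card_univ, nsmul_eq_mul]
    rw [← ENNReal.ofReal_natCast, ← ENNReal.ofReal_mul (by positivity)]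
    refine ENNReal.ofReal_le_ofReal ?_
    rw [hΛ, inv_div, mul_div_assoc', div_le_div_iff₀ (by positivity) (by positivity)]
    have : (0:ℝ) ≤ Fintype.card ι := by positivity
    nlinarith
  refine ⟨Ioo a b \ V, measurableSet_Ioo.diff hVm, sdiff_subset, ?_, ?_⟩
  · have h1 : volume (Ioo a b) = volume (Ioo a b ∩ V) + volume (Ioo a b \ V) :=
      (measure_inter_add_sdiff _ hVm).symm
    rw [Real.volume_Ioo] at h1
    have hf1 : volume (Ioo a b ∩ V) ≠ ⊤ := ne_top_of_le_ne_top ENNReal.ofReal_ne_top hVs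
    have hf2 : volume (Ioo a b \ V) ≠ ⊤ :=
      ne_top_of_le_ne_top (by rw [Real.volume_Ioo]; exact ENNReal.ofReal_ne_top) (measure_mono sdiff_subset)
    have h2 := congrArg ENNReal.toReal h1
    rw [ENNReal.toReal_ofReal hba.le, ENNReal.toReal_add hf1 hf2] at h2
    have h3 := ENNReal.toReal_mono ENNReal.ofReal_ne_top hVs
    rw [ENNReal.toReal_ofReal (by positivity)] at h3
    linarith
  · intro r hr i
    by_contra hc
    exact hr.2 (mem_iUnion.2 ⟨i, not_le.1 hc⟩)

lemma radial_ae {n : ℕ} (x₀ : Euc (n + 1)) {P : ℝ → Prop} (hP : ∀ᵐ r, P r) :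
    ∀ᵐ x : Euc (n + 1), P (dist x x₀) := by
  set T := toMeasurable volume {x | ¬ P x} with hT
  have hT0 : volume T = 0 := by rw [hT, measure_toMeasurable]; exact hP
  have hTm : MeasurableSet T := measurableSet_toMeasurable _ _
  set T' : Set (Euc (n + 1)) := (fun x => dist x x₀) ⁻¹' T with hT'
  have hTm' : MeasurableSet T' := (measurable_id.dist measurable_const) hTm
  have hF : Measurable (T'.indicator (fun _ => (1:ℝ≥0∞))) := measurable_const.indicator hTm'
  have h := chart_upper' x₀ _ hF
  have h0 : ∑ k : Fin (n + 1) × Bool,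
      ∫⁻ r in Ioi (0:ℝ), ∫⁻ y in closedBall (0 : Fin n → ℝ) 1,
        ENNReal.ofReal (r ^ n) * T'.indicator (fun _ => (1:ℝ≥0∞)) (x₀ + r • ph k.1 (sg k.2) y) = 0 := by
    refine Finset.sum_eq_zero fun k _ => ?_
    have hTae : ∀ᵐ r : ℝ, r ∉ T := by
      rw [ae_iff]; simpa using hT0
    rw [lintegral_congr_ae (g := fun _ => 0)]
    · simp
    · refine (ae_restrict_iff' measurableSet_Ioi).2 ?_
      filter_upwards [hTae] with r hr hr0
      have : ∀ y : Fin n → ℝ, x₀ + r • ph k.1 (sg k.2) y ∉ T' := by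
        intro y hy
        have hy' : dist (x₀ + r • ph k.1 (sg k.2) y) x₀ ∈ T := hy
        rw [dist_eq_norm, add_sub_cancel_left, norm_smul, norm_ph k.1 (abs_sg k.2),
          Real.norm_of_nonneg (le_of_lt hr0), mul_one] at hy'
        exact hr hy'
      simp [this]
  rw [h0, lintegral_indicator hTm', setLIntegral_one, nonpos_iff_eq_zero] at h
  rw [ae_iff]
  refine measure_mono_null (fun x hx => ?_) h
  exact subset_toMeasurable volume {x | ¬ P x} hx

lemma cutoff_exists {n : ℕ} (x₀ : Euc (n + 1)) {a b : ℝ} (hab : a < b) {U : Set ℝ}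
    (hU : MeasurableSet U) (hUab : U ⊆ Ioo a b) (hU0 : 0 < (volume U).toReal) :
    ∃ (η : Euc (n + 1) → ℝ) (Dη : Euc (n + 1) → Euc (n + 1)),
      (∀ x, 0 ≤ η x ∧ η x ≤ 1) ∧ (∀ x ∈ ball x₀ a, η x = 1) ∧ (∀ x, x ∉ ball x₀ b → η x = 0) ∧
      LipschitzWith (Real.toNNReal (volume U).toReal⁻¹) η ∧ (∀ᵐ x, HasGradientAt η (Dη x) x) ∧
      ∀ᵐ x, ‖Dη x‖ ≤ U.indicator (fun _ => (volume U).toReal⁻¹) (dist x x₀) := by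
  set c := (volume U).toReal with hc
  set χ : ℝ → ℝ := U.indicator (fun _ => c⁻¹) with hχ
  have hUfin : volume U ≠ ⊤ := fun h => by rw [hc, h] at hU0; simp at hU0
  have hχi : Integrable χ := by
    rw [hχ, integrable_indicator_iff hU]
    exact integrableOn_const hUfin
  have hχ0 : ∀ t, 0 ≤ χ t := fun t => indicator_nonneg (fun _ _ => by positivity) t
  have hχ1 : ∀ t, χ t ≤ c⁻¹ := fun t => indicator_le_self' (fun _ _ => by positivity) t
  have hχint : ∫ t, χ t = 1 := by
    rw [hχ, integral_indicator hU, setIntegral_const, smul_eq_mul, Measure.real, ← hc,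
      mul_inv_cancel₀ hU0.ne']
  have hii : ∀ s t, IntervalIntegrable χ volume s t := fun s t => hχi.intervalIntegrable
  set h : ℝ → ℝ := fun t => ∫ s in t..b, χ s with hh
  have hb : ∀ t, b ≤ t → h t = 0 := by
    intro t ht
    rw [hh]
    simp only
    rw [intervalIntegral.integral_symm, intervalIntegral.integral_of_le ht,
      setIntegral_eq_zero_of_forall_eq_zero, neg_zero]
    intro s hs
    exact indicator_of_notMem (fun h => absurd (hUab h).2 (not_lt.2 hs.1.le)) _
  have hle : ∀ t, t ≤ b → h t = ∫ s in Ioc t b, χ s := fun t ht =>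
    intervalIntegral.integral_of_le ht
  have ha : ∀ t, t ≤ a → h t = 1 := by
    intro t ht
    rw [hle t (ht.trans hab.le), ← hχint]
    refine setIntegral_eq_integral_of_forall_compl_eq_zero fun s hs => ?_
    refine indicator_of_notMem (fun h => hs ⟨lt_of_le_of_lt ht (hUab h).1, (hUab h).2.le⟩) _
  have h01 : ∀ t, 0 ≤ h t ∧ h t ≤ 1 := by
    intro t
    rcases le_total b t with ht | ht
    · rw [hb t ht]; norm_num
    · rw [hle t ht]
      refine ⟨integral_nonneg hχ0, ?_⟩
      rw [← hχint]
      exact setIntegral_le_integral hχi (Eventually.of_forall hχ0)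
  have hlip : LipschitzWith (Real.toNNReal c⁻¹) h := by
    refine LipschitzWith.of_dist_le_mul fun s t => ?_
    rw [Real.coe_toNNReal _ (by positivity), Real.dist_eq, Real.dist_eq]
    have e : h s - h t = ∫ r in s..t, χ r := by
      rw [hh]
      simp only
      rw [sub_eq_iff_eq_add, intervalIntegral.integral_add_adjacent_intervals (hii _ _) (hii _ _)]
    rw [e, abs_sub_comm]
    have hn : ∀ r ∈ uIoc s t, ‖χ r‖ ≤ c⁻¹ := fun r _ => by
      rw [Real.norm_of_nonneg (hχ0 r)]
      exact hχ1 r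
    exact intervalIntegral.norm_integral_le_of_norm_le_const hn
  have hder : ∀ᵐ t, HasDerivAt h (-χ t) t := by
    filter_upwards [LocallyIntegrable.ae_hasDerivAt_integral hχi.locallyIntegrable] with t ht
    have := (ht b).neg
    refine this.congr_of_eventuallyEq (Eventually.of_forall fun s => ?_)
    exact intervalIntegral.integral_symm b s
  have hdl : LipschitzWith 1 (fun x : Euc (n + 1) => dist x x₀) := LipschitzWith.dist_left x₀
  have hne : ∀ᵐ x : Euc (n + 1), x ≠ x₀ := by
    rw [ae_iff]; simp
  have hfd : ∀ᵐ x, HasFDerivAt (fun x => h (dist x x₀))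
      ((-χ (dist x x₀)) • fderiv ℝ (fun x => dist x x₀) x) x := by
    filter_upwards [radial_ae x₀ hder, hne] with x hx hxne
    have hd : DifferentiableAt ℝ (fun x => dist x x₀) x := by
      simp_rw [dist_eq_norm]
      exact (differentiableAt_id.sub_const x₀).norm ℝ (sub_ne_zero.2 hxne)
    exact hx.comp_hasFDerivAt x hd.hasFDerivAt
  refine ⟨fun x => h (dist x x₀), fun x => gradient (fun x => h (dist x x₀)) x, fun x => h01 _,
    fun x hx => ha _ (mem_ball.1 hx).le, fun x hx => hb _ (not_lt.1 hx), ?_, ?_, ?_⟩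
  · have := hlip.comp hdl
    rwa [mul_one] at this
  · filter_upwards [hfd] with x hx
    exact hx.differentiableAt.hasGradientAt
  · filter_upwards [hfd] with x hx
    rw [gradient, LinearIsometryEquiv.norm_map, hx.fderiv, norm_smul, norm_neg,
      Real.norm_of_nonneg (hχ0 _)]
    refine mul_le_of_le_one_right (hχ0 _) ?_
    simpa using norm_fderiv_le_of_lipschitz ℝ hdl (x₀ := x)

lemma slice_full {n m : ℕ} (x₀ : Euc (n + 1)) {R : ℝ} {q S : ℝ≥0∞} (hq : q ≠ 0)
    {U : Set ℝ} (hU : MeasurableSet U) (hUR : U ⊆ Ioo 0 R)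
    (V : Euc (n + 1) → Euc m) (hV : Measurable V)
    (hS : ∀ k : Fin (n + 1) × Bool, ∀ᵐ r, r ∈ U →
      eLpNorm (fun y : Fin n → ℝ => V (x₀ + r • ph k.1 (sg k.2) y)) q
            (volume.restrict (closedBall 0 1)) ≤ S) :
    eLpNorm ({x | dist x x₀ ∈ U}.indicator V) q volume ≤
      (((2 * (n + 1) : ℕ) : ℝ≥0∞) * ENNReal.ofReal (R ^ n) * volume U) ^ (1 / q.toReal) * S := by
  have hUm : MeasurableSet {x : Euc (n + 1) | dist x x₀ ∈ U} := (measurable_id.dist measurable_const) hU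
  have hWm : Measurable ({x | dist x x₀ ∈ U}.indicator V) := hV.indicator hUm
  have hdist : ∀ (k : Fin (n + 1) × Bool) (r : ℝ), 0 < r → ∀ y : Fin n → ℝ,
      dist (x₀ + r • ph k.1 (sg k.2) y) x₀ = r := fun k r hr0 y => by
    rw [dist_eq_norm, add_sub_cancel_left, norm_smul, norm_ph k.1 (abs_sg k.2),
      Real.norm_of_nonneg hr0.le, mul_one]
  rcases eq_or_ne q ⊤ with rfl | hqt
  · simp only [ENNReal.toReal_top, div_zero, ENNReal.rpow_zero, one_mul, eLpNorm_exponent_top] at hS ⊢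
    refine essSup_le_of_ae_le _ ?_
    set Z : Set (Euc (n + 1)) := {x | S < ‖({x | dist x x₀ ∈ U}.indicator V) x‖ₑ} with hZ
    have hZm : MeasurableSet Z := measurableSet_lt measurable_const hWm.enorm
    have hF : Measurable (Z.indicator (fun _ => (1:ℝ≥0∞))) := measurable_const.indicator hZm
    have h := chart_upper' x₀ _ hF
    rw [Finset.sum_eq_zero] at h
    · rw [lintegral_indicator hZm, setLIntegral_one, nonpos_iff_eq_zero] at h
      have hae : ∀ᵐ x, x ∉ Z := by rw [ae_iff]; simpa using h
      filter_upwards [hae] with x hx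
      exact not_lt.1 hx
    · intro k _
      rw [lintegral_congr_ae (g := fun _ => 0)]
      · simp
      refine (ae_restrict_iff' measurableSet_Ioi).2 ?_
      filter_upwards [hS k] with r hr hr0
      rw [lintegral_congr_ae (g := fun _ => 0)]
      · simp
      by_cases hrU : r ∈ U
      · have h1 := hr hrU
        filter_upwards [ae_le_eLpNormEssSup (μ := volume.restrict (closedBall (0 : Fin n → ℝ) 1))
          (f := fun y : Fin n → ℝ => V (x₀ + r • ph k.1 (sg k.2) y))] with y hy
        have hmem : x₀ + r • ph k.1 (sg k.2) y ∉ Z := by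
          rw [hZ]
          simp only [mem_ofPred_eq, not_lt]
          rw [indicator_of_mem (by simpa [hdist k r hr0 y] using hrU)]
          exact hy.trans h1
        rw [indicator_of_notMem hmem, mul_zero]
      · refine Eventually.of_forall fun y => ?_
        have hmem : x₀ + r • ph k.1 (sg k.2) y ∉ Z := by
          rw [hZ]
          simp only [mem_ofPred_eq, not_lt]
          rw [indicator_of_notMem (by simpa [hdist k r hr0 y] using hrU)]
          simp
        simp only [indicator_of_notMem hmem, mul_zero]
  · have hq0 : 0 < q.toReal := ENNReal.toReal_pos hq hqt
    rw [eLpNorm_eq_lintegral_rpow_enorm_toReal hq hqt]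
    have hF : Measurable (fun x => ‖({x | dist x x₀ ∈ U}.indicator V) x‖ₑ ^ q.toReal) :=
      hWm.enorm.pow_const _
    have h := chart_upper' x₀ _ hF
    have hk : ∀ k : Fin (n + 1) × Bool,
        ∫⁻ r in Ioi (0:ℝ), ∫⁻ y in closedBall (0 : Fin n → ℝ) 1,
          ENNReal.ofReal (r ^ n) *
            ‖({x | dist x x₀ ∈ U}.indicator V) (x₀ + r • ph k.1 (sg k.2) y)‖ₑ ^ q.toReal
        ≤ ENNReal.ofReal (R ^ n) * S ^ q.toReal * volume U := by
      intro k
      have hb : ∀ᵐ r ∂(volume.restrict (Ioi (0:ℝ))), ∫⁻ y in closedBall (0 : Fin n → ℝ) 1,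
          ENNReal.ofReal (r ^ n) *
            ‖({x | dist x x₀ ∈ U}.indicator V) (x₀ + r • ph k.1 (sg k.2) y)‖ₑ ^ q.toReal
          ≤ U.indicator (fun _ => ENNReal.ofReal (R ^ n) * S ^ q.toReal) r := by
        refine (ae_restrict_iff' measurableSet_Ioi).2 ?_
        filter_upwards [hS k] with r hr hr0
        rw [lintegral_const_mul' _ _ ENNReal.ofReal_ne_top]
        by_cases hrU : r ∈ U
        · rw [indicator_of_mem hrU]
          refine mul_le_mul' (ENNReal.ofReal_le_ofReal
            (pow_le_pow_left₀ (le_of_lt hr0) (hUR hrU).2.le n)) ?_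
          have h1 := hr hrU
          rw [eLpNorm_eq_lintegral_rpow_enorm_toReal hq hqt, one_div,
            ENNReal.rpow_inv_le_iff hq0] at h1
          refine le_trans (le_of_eq (lintegral_congr fun y => ?_)) h1
          rw [indicator_of_mem (by simpa [hdist k r hr0 y] using hrU)]
        · rw [indicator_of_notMem hrU]
          have : ∀ y : Fin n → ℝ, ({x | dist x x₀ ∈ U}.indicator V) (x₀ + r • ph k.1 (sg k.2) y) = 0 :=
            fun y => indicator_of_notMem (by simpa [hdist k r hr0 y] using hrU) _
          simp [this, hq0]
      refine (lintegral_mono_ae hb).trans ((setLIntegral_le_lintegral _ _).trans ?_)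
      rw [lintegral_indicator hU, setLIntegral_const]
    have h2 : ∫⁻ x, ‖({x | dist x x₀ ∈ U}.indicator V) x‖ₑ ^ q.toReal ≤
        (((2 * (n + 1) : ℕ) : ℝ≥0∞) * ENNReal.ofReal (R ^ n) * volume U) * S ^ q.toReal := by
      refine h.trans ((Finset.sum_le_sum fun k _ => hk k).trans (le_of_eq ?_))
      simp only [Finset.sum_const, Finset.card_univ, Fintype.card_prod, Fintype.card_fin,
        Fintype.card_bool, nsmul_eq_mul]
      rw [mul_comm (n + 1) 2]
      ring
    refine (ENNReal.rpow_le_rpow h2 (by positivity)).trans (le_of_eq ?_)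
    rw [ENNReal.mul_rpow_of_nonneg _ _ (by positivity), ← ENNReal.rpow_mul,
      mul_one_div_cancel hq0.ne', ENNReal.rpow_one]


lemma frob_tensor {m d : ℕ} (v : Euc d) (w : Euc m) :
    frobNorm (fun a b => v b * w a : Mat m d) = ‖v‖ * ‖w‖ := by
  rw [frobNorm, EuclideanSpace.norm_eq, EuclideanSpace.norm_eq, ← Real.sqrt_mul (by positivity),
    Finset.sum_mul_sum, Finset.sum_comm]
  simp [mul_pow]

lemma frob_le {m d : ℕ} (ξ : Mat m d) : frobNorm ξ ≤ Real.sqrt (m * d) * ‖ξ‖ := by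
  rw [frobNorm]
  refine Real.sqrt_le_iff.2 ⟨by positivity, ?_⟩
  rw [mul_pow, Real.sq_sqrt (by positivity)]
  refine (Finset.sum_le_sum (g := fun _ => (d:ℝ) * ‖ξ‖ ^ 2) fun i _ => ?_).trans ?_
  · refine (Finset.sum_le_sum (g := fun _ => ‖ξ‖ ^ 2) fun j _ => ?_).trans (by simp)
    rw [← sq_abs]
    exact pow_le_pow_left₀ (abs_nonneg _) ((norm_le_pi_norm (ξ i) j).trans (norm_le_pi_norm ξ i)) 2
  · simp; apply le_of_eq; ring

lemma num_eq (n : ℕ) {R δ K Λ C X s t : ℝ} (hR : 0 < R) (hδ : 0 < δ) (hK : 0 ≤ K) (hΛ : 0 ≤ Λ)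
    (hC : 0 ≤ C) (hX : 0 ≤ X) :
    2 / (δ * R) * (K * R ^ n * (δ * R)) ^ t * (Λ / (δ * R) * (C * (R ^ n)⁻¹ * X)) ^ s
      = 2 * K ^ t * (Λ * C) ^ s * R ^ (((n:ℝ) + 1) * t - ((n:ℝ) + 1) * s - 1) / δ ^ (1 + s - t) * X ^ s := by
  have hRn : 0 < R ^ n := by positivity
  have e1 : (K * R ^ n * (δ * R)) ^ t = K ^ t * R ^ ((n:ℝ) * t) * (δ ^ t * R ^ t) := by
    rw [Real.mul_rpow (by positivity) (by positivity), Real.mul_rpow (by positivity) (by positivity),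
      Real.mul_rpow (by positivity) (by positivity), Real.rpow_mul hR.le, Real.rpow_natCast]
  have e2 : (Λ / (δ * R) * (C * (R ^ n)⁻¹ * X)) ^ s
      = (Λ * C) ^ s / (δ ^ s * R ^ s * R ^ ((n:ℝ) * s)) * X ^ s := by
    have : Λ / (δ * R) * (C * (R ^ n)⁻¹ * X) = (Λ * C) / (δ * R * R ^ n) * X := by
      field_simp
    rw [this, Real.mul_rpow (by positivity) (by positivity), Real.div_rpow (by positivity) (by positivity),
      Real.mul_rpow (by positivity) (by positivity), Real.mul_rpow (by positivity) (by positivity),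
      Real.rpow_mul hR.le, Real.rpow_natCast, Real.mul_rpow hδ.le hR.le]
  have e3 : R ^ (((n:ℝ) + 1) * t - ((n:ℝ) + 1) * s - 1)
      = R ^ ((n:ℝ) * t) * R ^ t / (R ^ ((n:ℝ) * s) * R ^ s) / R := by
    rw [Real.rpow_sub hR, Real.rpow_sub hR, Real.rpow_one, add_mul, add_mul, one_mul, one_mul,
      Real.rpow_add hR, Real.rpow_add hR]
  have e4 : δ ^ (1 + s - t) = δ * δ ^ s / δ ^ t := by
    rw [Real.rpow_sub hδ, Real.rpow_add hδ, Real.rpow_one]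
  rw [e1, e2, e3, e4]
  have p1 : 0 < R ^ ((n:ℝ) * s) := by positivity
  have p2 : 0 < R ^ s := by positivity
  have p3 : 0 < δ ^ s := by positivity
  have p4 : 0 < δ ^ t := by positivity
  field_simp

lemma num_X {R p a b : ℝ} (hp : 1 ≤ p) (hR : 0 < R) (ha : 0 ≤ a) (hb : 0 ≤ b) :
    (R ^ p * a + b) ^ (1 / p) ≤ R * a ^ (1 / p) + b ^ (1 / p) := by
  have hp0 : 0 < p := by linarith
  refine (Real.rpow_add_le_add_rpow (by positivity) hb (by positivity)
    (by rw [div_le_one hp0]; exact hp)).trans (le_of_eq ?_)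
  rw [Real.mul_rpow (by positivity) ha, ← Real.rpow_mul hR.le, mul_one_div_cancel hp0.ne', Real.rpow_one]

lemma lint_eq {d m : ℕ} {x₀ : Euc d} {R p ρ : ℝ} (hp : 1 ≤ p) (hR : 0 < R)
    {u : Euc d → Euc m} {Du : Euc d → Mat m d}
    (h : MemW1p (ball x₀ R) (ENNReal.ofReal p) u Du) :
    ∫⁻ x in ball x₀ R \ ball x₀ ρ,
        (ENNReal.ofReal R ^ p * ENNReal.ofReal (frobNorm (Du x)) ^ p + ‖u x‖ₑ ^ p)
      = ENNReal.ofReal (R ^ p * (∫ x in ball x₀ R \ ball x₀ ρ, frobNorm (Du x) ^ p)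
          + ∫ x in ball x₀ R \ ball x₀ ρ, ‖u x‖ ^ p) := by
  have hp0 : 0 < p := by linarith
  have hpp : ENNReal.ofReal p ≠ 0 := by simpa using hp0
  have hmono : (volume : Measure (Euc d)).restrict (ball x₀ R \ ball x₀ ρ) ≤ volume.restrict (ball x₀ R) :=
    Measure.restrict_mono sdiff_subset le_rfl
  have hu := h.1.mono_measure hmono
  have hD := h.2.1.mono_measure hmono
  have hF : MemLp (fun x => frobNorm (Du x)) (ENNReal.ofReal p)
      (volume.restrict (ball x₀ R \ ball x₀ ρ)) := by
    refine hD.of_le_mul (c := Real.sqrt (m * d)) (continuous_frob.comp_aestronglyMeasurable hD.1)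
      (Eventually.of_forall fun x => ?_)
    rw [Real.norm_of_nonneg (show 0 ≤ frobNorm (Du x) from Real.sqrt_nonneg _)]
    exact frob_le _
  have hf0 : ∀ x, 0 ≤ frobNorm (Du x) := fun x => Real.sqrt_nonneg _
  have i1 := hu.integrable_norm_rpow hpp ENNReal.ofReal_ne_top
  have i2 := hF.integrable_norm_rpow hpp ENNReal.ofReal_ne_top
  rw [ENNReal.toReal_ofReal hp0.le] at i1 i2
  simp_rw [Real.norm_of_nonneg (hf0 _)] at i2
  have j1 := integral_nonneg (μ := volume.restrict (ball x₀ R \ ball x₀ ρ))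
    (f := fun x => ‖u x‖ ^ p) (fun x => by positivity)
  have j2 := integral_nonneg (μ := volume.restrict (ball x₀ R \ ball x₀ ρ))
    (f := fun x => frobNorm (Du x) ^ p) (fun x => Real.rpow_nonneg (hf0 x) p)
  rw [ENNReal.ofReal_add (mul_nonneg (by positivity) j2) j1, ENNReal.ofReal_mul (by positivity),
    ofReal_integral_eq_lintegral_ofReal i1 (Eventually.of_forall fun x => by positivity),
    ofReal_integral_eq_lintegral_ofReal i2 (Eventually.of_forall fun x => Real.rpow_nonneg (hf0 x) p),
    lintegral_add_right' _ (hu.1.enorm.pow_const p), lintegral_const_mul' _ _ (by finiteness),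
    ENNReal.ofReal_rpow_of_nonneg hR.le hp0.le]
  congr 2
  · refine lintegral_congr fun x => ?_
    rw [ENNReal.ofReal_rpow_of_nonneg (hf0 x) hp0.le]
  · funext x
    rw [← ofReal_norm, ENNReal.ofReal_rpow_of_nonneg (norm_nonneg _) hp0.le]

lemma cutoff_succ
    (N n m : ℕ) (p : ℝ) (q : ℝ≥0∞) (hp : 1 ≤ p) (hqp : ENNReal.ofReal p < q)
    (hq1 : p < n → q ≤ ENNReal.ofReal (n * p / (n - p)))
    (hq2 : p = n → q < ⊤) (hq3 : n < p → q = ⊤) :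
    ∃ C : ℝ, 0 < C ∧
      ∀ (x₀ : Euc (n + 1)) (R : ℝ), 0 < R →
        ∀ (u : Fin N → Euc (n + 1) → Euc m) (Du : Fin N → Euc (n + 1) → Mat m (n + 1)),
          (∀ i, MemW1p (ball x₀ R) (ENNReal.ofReal p) (u i) (Du i)) →
          ∀ δ : ℝ, 0 < δ → δ ≤ 1 / 2 →
            ∃ (η : Euc (n + 1) → ℝ) (Dη : Euc (n + 1) → Euc (n + 1)),
              (∀ x, 0 ≤ η x ∧ η x ≤ 1) ∧
              (∀ x ∈ ball x₀ ((1 - δ) * R), η x = 1) ∧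
              (∀ x, x ∉ ball x₀ R → η x = 0) ∧
              LipschitzWith (Real.toNNReal (2 / (δ * R))) η ∧
              (∀ᵐ x ∂volume.restrict (ball x₀ R), HasGradientAt η (Dη x) x) ∧
              (∀ᵐ x ∂volume.restrict (ball x₀ R), ‖Dη x‖ ≤ 2 / (δ * R)) ∧
              ∀ i, eLpNorm (fun x => frobNorm (fun a b => Dη x b * u i x a)) q
                    (volume.restrict (ball x₀ R)) ≤
                  ENNReal.ofReal
                    (C * R ^ (((n:ℝ) + 1) * (1 / q.toReal) - ((n:ℝ) + 1) * (1 / p) - 1) /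
                        δ ^ (1 + 1 / p - 1 / q.toReal) *
                      (R * (∫ x in ball x₀ R \ ball x₀ ((1 - δ) * R),
                              frobNorm (Du i x) ^ p) ^ (1 / p) +
                        (∫ x in ball x₀ R \ ball x₀ ((1 - δ) * R),
                            ‖u i x‖ ^ p) ^ (1 / p))) := by
  have hp0 : 0 < p := by linarith
  have hq : q ≠ 0 := (lt_of_le_of_lt zero_le hqp).ne'
  obtain ⟨C, hC, hmix⟩ := mixed n m p q hp hq1 hq2 hq3 hq
  lift C to ℝ≥0 using hC
  set κ : ℝ := 2 * (Fintype.card (Fin N × (Fin (n + 1) × Bool)) + 1) with hκ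
  have hκ0 : 0 ≤ κ := by positivity
  set K : ℝ := ((2 * (n + 1) : ℕ) : ℝ) with hK
  have hK0 : 0 ≤ K := by positivity
  refine ⟨2 * K ^ (1 / q.toReal) * (κ * C) ^ (1 / p) + 1, by positivity,
    fun x₀ R hR u Du h δ hδ hδ2 => ?_⟩
  have hδR : 0 < δ * R := by positivity
  choose g hg hgi hgs using fun k : Fin N × (Fin (n + 1) × Bool) =>
    hmix x₀ R hR (u k.1) (Du k.1) (h k.1) δ hδ hδ2 k.2
  set a : Fin N → ℝ := fun i => ∫ x in ball x₀ R \ ball x₀ ((1 - δ) * R), frobNorm (Du i x) ^ p with ha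
  set b : Fin N → ℝ := fun i => ∫ x in ball x₀ R \ ball x₀ ((1 - δ) * R), ‖u i x‖ ^ p with hb
  have ha0 : ∀ i, 0 ≤ a i := fun i => integral_nonneg fun x => Real.rpow_nonneg (Real.sqrt_nonneg _) p
  have hb0 : ∀ i, 0 ≤ b i := fun i => integral_nonneg fun x => by positivity
  set X : Fin N → ℝ := fun i => R ^ p * a i + b i with hX
  have hX0 : ∀ i, 0 ≤ X i := fun i => by
    have := ha0 i; have := hb0 i; positivity
  have hgi' : ∀ k, ∫⁻ r in Ioo ((1 - δ) * R) R, g k r ≤ ENNReal.ofReal (C * (R ^ n)⁻¹ * X k.1) := by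
    intro k
    refine (hgi k).trans (le_of_eq ?_)
    rw [lint_eq hp hR (h k.1), ENNReal.ofReal_mul (by positivity), ENNReal.ofReal_mul (by positivity),
      ENNReal.ofReal_inv_of_pos (by positivity), ENNReal.ofReal_coe_nnreal]
  have hlt : (1 - δ) * R < R := by nlinarith
  have hsub : R - (1 - δ) * R = δ * R := by ring
  obtain ⟨U, hUm, hUs, hUv, hUg⟩ := good_radii g hg hlt _ (fun k => ENNReal.ofReal_ne_top) hgi'
  rw [hsub] at hUv hUg
  have hUpos : 0 < (volume U).toReal := lt_of_lt_of_le (by positivity) hUv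
  have hinv : (volume U).toReal⁻¹ ≤ 2 / (δ * R) := by
    rw [show 2 / (δ * R) = (δ * R / 2)⁻¹ by rw [inv_div]]
    exact inv_anti₀ (by positivity) hUv
  have hUle : volume U ≤ ENNReal.ofReal (δ * R) := by
    refine (measure_mono hUs).trans ?_
    rw [Real.volume_Ioo, hsub]
  obtain ⟨η, Dη, h1, h2, h3, h4, h5, h6⟩ := cutoff_exists x₀ hlt hUm hUs hUpos
  refine ⟨η, Dη, h1, h2, h3, h4.weaken (Real.toNNReal_le_toNNReal hinv), ae_restrict_of_ae h5, ?_, ?_⟩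
  · refine ae_restrict_of_ae ?_
    filter_upwards [h6] with x hx
    exact hx.trans ((indicator_le_self' (fun _ _ => by positivity) _).trans hinv)
  intro i
  -- measurable representative
  set V := (h i).1.1.mk (u i) with hV
  have hVm : Measurable V := (h i).1.1.stronglyMeasurable_mk.measurable
  have hVae : ∀ᵐ x, x ∈ ball x₀ R → u i x = V x :=
    (ae_restrict_iff' measurableSet_ball).1 (h i).1.1.ae_eq_mk
  set S : ℝ≥0∞ := ENNReal.ofReal (κ / (δ * R) * (C * (R ^ n)⁻¹ * X i)) ^ (1 / p) with hS
  have hUR : U ⊆ Ioo 0 R := hUs.trans (Ioo_subset_Ioo_left (by nlinarith))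
  have hslice : ∀ k : Fin (n + 1) × Bool, ∀ᵐ r, r ∈ U →
      eLpNorm (fun y : Fin n → ℝ => V (x₀ + r • ph k.1 (sg k.2) y)) q
            (volume.restrict (closedBall 0 1)) ≤ S := by
    intro k
    filter_upwards [hgs (i, k), chart_ae k.1 (abs_sg k.2) x₀ hVae] with r hr hr2 hrU
    have hr0 : 0 < r := (hUR hrU).1
    have hmono : (volume : Measure (Fin n → ℝ)).restrict (closedBall 0 1) ≤
            volume.restrict (closedBall 0 2) :=
      Measure.restrict_mono (closedBall_subset_closedBall (by norm_num)) le_rfl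
    have hcongr : (fun y : Fin n → ℝ => V (x₀ + r • ph k.1 (sg k.2) y))
        =ᵐ[volume.restrict (closedBall 0 1)] (fun y => u i (x₀ + r • ph k.1 (sg k.2) y)) := by
      filter_upwards [ae_mono hmono (hr2 hr0)] with y hy
      refine (hy ?_).symm
      rw [mem_ball, dist_eq_norm, add_sub_cancel_left, norm_smul, norm_ph k.1 (abs_sg k.2),
        Real.norm_of_nonneg hr0.le, mul_one]
      exact (hUR hrU).2
    rw [eLpNorm_congr_ae hcongr]
    refine (hr (hUs hrU)).trans (ENNReal.rpow_le_rpow ?_ (by positivity))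
    refine (hUg r hrU (i, k)).trans (le_of_eq ?_)
    rw [← ENNReal.ofReal_mul (by positivity)]
  have hfull := slice_full x₀ hq hUm hUR V hVm hslice
  have hstep : eLpNorm (fun x => frobNorm (fun a b => Dη x b * u i x a)) q (volume.restrict (ball x₀ R)) ≤
      ENNReal.ofReal (2 / (δ * R)) * eLpNorm ({x | dist x x₀ ∈ U}.indicator V) q volume := by
    refine (eLpNorm_le_mul_eLpNorm_of_ae_le_mul (g := {x | dist x x₀ ∈ U}.indicator V)
      (c := 2 / (δ * R)) ?_ q).trans ?_
    · refine (ae_restrict_iff' measurableSet_ball).2 ?_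
      filter_upwards [h6, hVae] with x hx hx2 hxb
      rw [frob_tensor, Real.norm_of_nonneg (by positivity)]
      by_cases hxU : dist x x₀ ∈ U
      · have hxU' : x ∈ {x | dist x x₀ ∈ U} := hxU
        rw [indicator_of_mem hxU] at hx
        rw [indicator_of_mem hxU', hx2 hxb]
        exact mul_le_mul_of_nonneg_right (hx.trans hinv) (norm_nonneg _)
      · have hxU' : x ∉ {x | dist x x₀ ∈ U} := hxU
        rw [indicator_of_notMem hxU] at hx
        rw [indicator_of_notMem hxU', le_antisymm hx (norm_nonneg _)]
        simp
    · exact mul_le_mul_right (eLpNorm_mono_measure _ Measure.restrict_le_self) _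
  refine hstep.trans ((mul_le_mul_right hfull _).trans ?_)
  have hpow : (((2 * (n + 1) : ℕ) : ℝ≥0∞) * ENNReal.ofReal (R ^ n) * volume U) ^ (1 / q.toReal)
      ≤ ENNReal.ofReal ((K * R ^ n * (δ * R)) ^ (1 / q.toReal)) := by
    rw [← ENNReal.ofReal_rpow_of_nonneg (by positivity) (by positivity)]
    refine ENNReal.rpow_le_rpow ?_ (by positivity)
    rw [ENNReal.ofReal_mul (by positivity), ENNReal.ofReal_mul (by positivity), hK, ENNReal.ofReal_natCast]
    exact mul_le_mul_right hUle _
  have hXi := hX0 i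
  have hSe : S = ENNReal.ofReal ((κ / (δ * R) * (C * (R ^ n)⁻¹ * X i)) ^ (1 / p)) := by
    rw [hS, ENNReal.ofReal_rpow_of_nonneg (by positivity) (by positivity)]
  refine (mul_le_mul_right (mul_le_mul_left hpow _) _).trans ?_
  rw [hSe, ← ENNReal.ofReal_mul (by positivity), ← ENNReal.ofReal_mul (by positivity), ← mul_assoc]
  refine ENNReal.ofReal_le_ofReal ?_
  refine (num_eq n (s := 1 / p) (t := 1 / q.toReal) hR hδ hK0 hκ0 C.coe_nonneg hXi).le.trans ?_
  refine mul_le_mul ?_ (num_X hp hR (ha0 i) (hb0 i)) (by positivity) (by positivity)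
  refine div_le_div_of_nonneg_right ?_ (by positivity)
  refine mul_le_mul_of_nonneg_right ?_ (by positivity)
  exact le_add_of_nonneg_right zero_le_one

/-- **Lemma 3.1.** For exponents `p ≥ 1` and `q > p` with
`q ≤ (d−1)p/(d−1−p)` if `p < d−1`, `q < ∞` if `p = d−1` and `q = ∞` if `p > d−1`, there is
`C = C(N,d,m,p,q)` such that for every ball `B_R(x₀)`, all `u_1, …, u_N ∈ W^{1,p}(B_R)^m`
and every `δ ∈ (0,1/2]` there is a cut-off `η ∈ W_0^{1,∞}(B_R)` with `0 ≤ η ≤ 1`, `η = 1`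
on `B_{(1−δ)R}`, `‖∇η‖_∞ ≤ 2/(δR)` and
`‖∇η ⊗ u_i‖_{L^q(B_R)} ≤ C R^{d/q−d/p−1} δ^{−(1+1/p−1/q)} (R‖Du_i‖_{L^p(annulus)} +
‖u_i‖_{L^p(annulus)})`, with the convention `d/∞ = 1/∞ = 0`. -/
theorem cutoff_with_optimal_integrability
    (N d m : ℕ) (p : ℝ) (q : ℝ≥0∞) (hp : 1 ≤ p)
    (hqp : ENNReal.ofReal p < q)
    (hq1 : p < (d : ℝ) - 1 → q ≤ ENNReal.ofReal (((d : ℝ) - 1) * p / ((d : ℝ) - 1 - p)))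
    (hq2 : p = (d : ℝ) - 1 → q < ⊤)
    (hq3 : (d : ℝ) - 1 < p → q = ⊤) :
    ∃ C : ℝ, 0 < C ∧
      ∀ (x₀ : Euc d) (R : ℝ), 0 < R →
        ∀ (u : Fin N → Euc d → Euc m) (Du : Fin N → Euc d → Mat m d),
          (∀ i, MemW1p (ball x₀ R) (ENNReal.ofReal p) (u i) (Du i)) →
          ∀ δ : ℝ, 0 < δ → δ ≤ 1 / 2 →
            ∃ (η : Euc d → ℝ) (Dη : Euc d → Euc d),
              (∀ x, 0 ≤ η x ∧ η x ≤ 1) ∧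
              (∀ x ∈ ball x₀ ((1 - δ) * R), η x = 1) ∧
              (∀ x, x ∉ ball x₀ R → η x = 0) ∧
              LipschitzWith (Real.toNNReal (2 / (δ * R))) η ∧
              (∀ᵐ x ∂volume.restrict (ball x₀ R), HasGradientAt η (Dη x) x) ∧
              (∀ᵐ x ∂volume.restrict (ball x₀ R), ‖Dη x‖ ≤ 2 / (δ * R)) ∧
              ∀ i, eLpNorm (fun x => frobNorm (fun a b => Dη x b * u i x a)) q
                    (volume.restrict (ball x₀ R)) ≤
                  ENNReal.ofReal
                    (C * R ^ ((d : ℝ) / q.toReal - (d : ℝ) / p - 1) /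
                        δ ^ (1 + 1 / p - 1 / q.toReal) *
                      (R * (∫ x in ball x₀ R \ ball x₀ ((1 - δ) * R),
                              frobNorm (Du i x) ^ p) ^ (1 / p) +
                        (∫ x in ball x₀ R \ ball x₀ ((1 - δ) * R),
                            ‖u i x‖ ^ p) ^ (1 / p))) := by
  rcases d with _ | n
  · refine ⟨1, one_pos, fun x₀ R hR u Du _ δ hδ _ => ⟨fun _ => 1, fun _ => 0, ?_, ?_, ?_, ?_, ?_, ?_, ?_⟩⟩
    · intro x; norm_num
    · intro x _; rfl
    · intro x hx
      exact absurd (by rw [Subsingleton.elim x x₀]; exact mem_ball_self hR) hx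
    · exact (LipschitzWith.const (1 : ℝ)).weaken zero_le'
    · exact Eventually.of_forall fun x => hasGradientAt_const x 1
    · refine Eventually.of_forall fun x => ?_
      rw [norm_zero]
      positivity
    · intro i
      have : (fun x : Euc 0 => frobNorm (fun (a : Fin m) (b : Fin 0) => (0 : Euc 0) b * u i x a))
          = fun _ => 0 := by
        funext x; simp [frobNorm]
      rw [this, eLpNorm_zero']
      exact zero_le'
  · have e : ((n + 1 : ℕ) : ℝ) - 1 = n := by push_cast; ring
    rw [e] at hq1 hq2 hq3
    obtain ⟨C, hC, h⟩ := cutoff_succ N n m p q hp hqp hq1 hq2 hq3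
    refine ⟨C, hC, ?_⟩
    have e1 : ((n + 1 : ℕ) : ℝ) / q.toReal - ((n + 1 : ℕ) : ℝ) / p - 1
        = ((n : ℝ) + 1) * (1 / q.toReal) - ((n : ℝ) + 1) * (1 / p) - 1 := by
      push_cast; ring
    rw [e1]
    exact h

end
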